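/- arXiv:2512.21498 — 10 statements merged into one kernel-verified Lean document; each statement's English description precedes it below -/
import Mathlib

section
/- Let f and f_k (k ∈ ℕ) be entire functions, each having infinitely many zeros, all of which are simple, and suppose f_k → f uniformly on every compact subset of ℂ. Then for every continuous compactly supported φ : ℂ → ℝ, the finite sums satisfy ∑_{a ∈ f_k⁻¹(0)} φ(a) → ∑_{a ∈ f⁻¹(0)} φ(a) as k → ∞. (Here each zero set f_k⁻¹(0) and f⁻¹(0) is a countably infinite locally finite subset of ℂ, so each sum has finitely many nonzero terms.) -/
open Filter

lemma zs_local (f : ℂ → ℂ) (fk : ℕ → ℂ → ℂ)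
    (hf : Differentiable ℂ f) (hfk : ∀ k, Differentiable ℂ (fk k))
    (hconv : ∀ K : Set ℂ, IsCompact K → TendstoUniformlyOn fk f atTop K)
    (a : ℂ) (ha : f a = 0) (ha' : deriv f a ≠ 0) :
    ∃ r > 0, ∃ ζ : ℕ → ℂ, Tendsto ζ atTop (nhds a) ∧
      ∀ᶠ k in atTop, fk k (ζ k) = 0 ∧ ∀ z ∈ Metric.ball a r, fk k z = 0 → z = ζ k := by
  obtain ⟨c, hc⟩ : ∃ c : ℝ, c = ‖deriv f a‖ / 4 := ⟨_, rfl⟩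
  have hc0 : 0 < c := by rw [hc]; have := norm_pos_iff.2 ha'; positivity
  have hlu : TendstoLocallyUniformlyOn fk f atTop Set.univ :=
    (tendstoLocallyUniformlyOn_iff_forall_isCompact isOpen_univ).2 fun K _ hK => hconv K hK
  have hd := hlu.deriv (Eventually.of_forall fun k => (hfk k).differentiableOn) isOpen_univ
  rw [tendstoLocallyUniformlyOn_iff_forall_isCompact isOpen_univ] at hd
  have hdc : Continuous (deriv f) := (hf.contDiff (n := 1)).continuous_deriv le_rfl
  obtain ⟨r, hr, hrb⟩ := Metric.nhds_basis_closedBall.eventually_iff.1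
    (hdc.continuousAt.eventually (Metric.ball_mem_nhds (deriv f a) hc0))
  have hlow : ∀ᶠ k in atTop, ∀ z ∈ Metric.closedBall a r, ∀ w ∈ Metric.closedBall a r,
      2 * c * ‖z - w‖ ≤ ‖fk k z - fk k w‖ := by
    have h1 := Metric.tendstoUniformlyOn_iff.1
      (hd (Metric.closedBall a r) (Set.subset_univ _) (isCompact_closedBall a r)) c hc0
    filter_upwards [h1] with k hk z hz w hw
    have h2 : ‖(fk k z - deriv f a * z) - (fk k w - deriv f a * w)‖ ≤ (2 * c) * ‖z - w‖ := by
      refine Convex.norm_image_sub_le_of_norm_hasDerivWithin_le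
        (f := fun z => fk k z - deriv f a * z) (f' := fun z => deriv (fk k) z - deriv f a)
        (s := Metric.closedBall a r) ?_ ?_ (convex_closedBall a r) hw hz
      · intro x hx
        have := ((hfk k x).hasDerivAt.sub ((hasDerivAt_id x).const_mul (deriv f a)))
        simp only [mul_one] at this
        exact this.hasDerivWithinAt
      · intro x hx
        have e1 := hk x hx
        have e2 : dist (deriv f x) (deriv f a) < c := hrb hx
        rw [dist_comm] at e1
        have e3 := dist_triangle (deriv (fk k) x) (deriv f x) (deriv f a)
        rw [← dist_eq_norm]
        simp only [Function.comp] at e1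
        linarith
    have h3 : ‖deriv f a * (z - w)‖ = 4 * c * ‖z - w‖ := by
      rw [norm_mul, hc]; ring
    have h4 : deriv f a * (z - w) = (fk k z - fk k w) -
      ((fk k z - deriv f a * z) - (fk k w - deriv f a * w)) := by ring
    have h5 := norm_sub_le (fk k z - fk k w)
      ((fk k z - deriv f a * z) - (fk k w - deriv f a * w))
    rw [← h4, h3] at h5
    linarith
  have hfa : Tendsto (fun k => fk k a) atTop (nhds 0) := by
    have := (hconv {a} isCompact_singleton).tendsto_at (Set.mem_singleton a)
    rwa [ha] at this
  have haB : a ∈ Metric.closedBall a r := Metric.mem_closedBall_self hr.le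
  have hex : ∀ᶠ k in atTop, ∃ z ∈ Metric.closedBall a r, fk k z = 0 := by
    filter_upwards [hlow, hfa.eventually (Metric.ball_mem_nhds 0 (mul_pos hc0 hr))] with k hk hka
    have h1 := DiffContOnCl.ball_subset_image_closedBall (f := fk k) (z₀ := a) (r := r)
      (ε := 2 * c * r) (hfk k).diffContOnCl hr
      (fun z hz => by
        have := hk z (Metric.sphere_subset_closedBall hz) a haB
        rwa [mem_sphere_iff_norm.1 hz] at this)
      (by
        have h2 : ∀ᶠ z in nhdsWithin a {a}ᶜ, fk k z ≠ fk k a := by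
          filter_upwards [self_mem_nhdsWithin,
            nhdsWithin_le_nhds (Metric.closedBall_mem_nhds a hr)] with z hz hzb heq
          have h3 := hk z hzb a haB
          rw [heq, sub_self, norm_zero] at h3
          have h4 : 0 < ‖z - a‖ := norm_pos_iff.2 (sub_ne_zero.2 hz)
          have : 0 < 2 * c * ‖z - a‖ := by positivity
          linarith
        exact h2.frequently.filter_mono nhdsWithin_le_nhds)
    have h5 : (0 : ℂ) ∈ Metric.ball (fk k a) (2 * c * r / 2) := by
      have h6 : dist (fk k a) 0 < c * r := hka
      rw [Metric.mem_ball, dist_comm]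
      linarith
    exact h1 h5
  classical
  let ζ : ℕ → ℂ := fun k =>
    if h : ∃ z ∈ Metric.closedBall a r, fk k z = 0 then h.choose else a
  have hζ : ∀ᶠ k in atTop, ζ k ∈ Metric.closedBall a r ∧ fk k (ζ k) = 0 := by
    filter_upwards [hex] with k hk
    have : ζ k = hk.choose := dif_pos hk
    rw [this]
    exact hk.choose_spec
  refine ⟨r, hr, ζ, ?_, ?_⟩
  · rw [tendsto_iff_norm_sub_tendsto_zero]
    have hlim : Tendsto (fun k => ‖fk k a‖ / (2 * c)) atTop (nhds 0) := by
      simpa using hfa.norm.div_const (2 * c)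
    refine squeeze_zero' (Eventually.of_forall fun _ => norm_nonneg _) ?_ hlim
    filter_upwards [hlow, hζ] with k hk hz
    have := hk _ hz.1 a haB
    rw [hz.2, zero_sub, norm_neg] at this
    rw [le_div_iff₀ (by positivity)]
    linarith
  · filter_upwards [hlow, hζ] with k hk hz
    refine ⟨hz.2, fun z hzb hz0 => ?_⟩
    have := hk z (Metric.ball_subset_closedBall hzb) _ hz.1
    rw [hz.2, hz0, sub_self, norm_zero] at this
    by_contra hne
    have h4 : 0 < ‖z - ζ k‖ := norm_pos_iff.2 (sub_ne_zero.2 hne)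
    have : 0 < 2 * c * ‖z - ζ k‖ := by positivity
    linarith

lemma zs_finite (f : ℂ → ℂ) (hf : Differentiable ℂ f)
    (hfs : ∀ z, f z = 0 → deriv f z ≠ 0) (K : Set ℂ) (hK : IsCompact K) :
    (K ∩ {z | f z = 0}).Finite := by
  by_contra hinf
  obtain ⟨x, -, hx⟩ := Set.Infinite.exists_accPt_of_subset_isCompact hinf hK
    Set.inter_subset_left
  rw [accPt_iff_frequently_nhdsNE] at hx
  have : ∀ᶠ y in nhdsWithin x {x}ᶜ, f y ≠ 0 := by
    by_cases h0 : f x = 0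
    · exact (hf x).hasDerivAt.eventually_ne (hfs x h0)
    · exact nhdsWithin_le_nhds (hf.continuous.continuousAt.eventually_ne h0)
  obtain ⟨y, hy, hy'⟩ := (hx.and_eventually this).exists
  exact hy' hy.2

/-- Let `f` and the `f_k` be entire functions, each with infinitely many zeros, all simple,
and suppose `f_k → f` uniformly on every compact subset of `ℂ`.  Then for every continuous
compactly supported `φ : ℂ → ℝ`, the (finitely supported) sums over the zero sets satisfy
`∑_{a ∈ f_k⁻¹(0)} φ(a) → ∑_{a ∈ f⁻¹(0)} φ(a)`. -/
theorem zero_set_sums_tendsto (f : ℂ → ℂ) (fk : ℕ → ℂ → ℂ)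
    (hf : Differentiable ℂ f) (hfk : ∀ k, Differentiable ℂ (fk k))
    (hfz : {z : ℂ | f z = 0}.Infinite) (hfkz : ∀ k, {z : ℂ | fk k z = 0}.Infinite)
    (hfs : ∀ z, f z = 0 → deriv f z ≠ 0)
    (hfks : ∀ k z, fk k z = 0 → deriv (fk k) z ≠ 0)
    (hconv : ∀ K : Set ℂ, IsCompact K → TendstoUniformlyOn fk f atTop K)
    (φ : ℂ → ℝ) (hφc : Continuous φ) (hφs : HasCompactSupport φ) :
    Tendsto (fun k => ∑ᶠ a ∈ {z : ℂ | fk k z = 0}, φ a) atTop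
      (nhds (∑ᶠ a ∈ {z : ℂ | f z = 0}, φ a)) := by
  classical
  have hK : IsCompact (tsupport φ) := hφs
  have hfin := zs_finite f hf hfs _ hK
  set S : Finset ℂ := hfin.toFinset with hS
  have hSm : ∀ a, a ∈ S ↔ a ∈ tsupport φ ∧ f a = 0 := fun a => by simp [hS]
  have hex : ∀ a : ℂ, ∃ r > 0, ∃ ζ : ℕ → ℂ, a ∈ S → (Tendsto ζ atTop (nhds a) ∧
      ∀ᶠ k in atTop, fk k (ζ k) = 0 ∧ ∀ z ∈ Metric.ball a r, fk k z = 0 → z = ζ k) := by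
    intro a
    by_cases h : a ∈ S
    · have h0 := ((hSm a).1 h).2
      obtain ⟨r, hr, ζ, h1⟩ := zs_local f fk hf hfk hconv a h0 (hfs a h0)
      exact ⟨r, hr, ζ, fun _ => h1⟩
    · exact ⟨1, one_pos, fun _ => 0, fun h' => absurd h' h⟩
  choose r hr ζ hζ using hex
  have hlim : ∑ᶠ a ∈ {z : ℂ | f z = 0}, φ a = ∑ a ∈ S, φ a := by
    rw [← finsum_mem_coe_finset]
    refine finsum_mem_inter_support_eq' _ _ _ fun x hx => ?_
    have := subset_tsupport φ hx
    simp [hSm, this]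
  -- no zeros away from the balls
  have hL : IsCompact (tsupport φ \ ⋃ a ∈ S, Metric.ball a (r a)) :=
    hK.diff (isOpen_biUnion fun a _ => Metric.isOpen_ball)
  have haway : ∀ᶠ k in atTop, ∀ z ∈ tsupport φ \ ⋃ a ∈ S, Metric.ball a (r a), fk k z ≠ 0 := by
    obtain ⟨m, hm, hmb⟩ : ∃ m > 0, ∀ z ∈ tsupport φ \ ⋃ a ∈ S, Metric.ball a (r a),
        m ≤ ‖f z‖ := by
      rcases Set.eq_empty_or_nonempty (tsupport φ \ ⋃ a ∈ S, Metric.ball a (r a)) with he | hne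
      · rw [he]; exact ⟨1, one_pos, fun z hz => absurd hz (Set.notMem_empty z)⟩
      · obtain ⟨w, hw, hmin⟩ := hL.exists_isMinOn hne hf.continuous.norm.continuousOn
        refine ⟨‖f w‖, norm_pos_iff.2 fun h0 => ?_, fun z hz => hmin hz⟩
        have hwS : w ∈ S := (hSm w).2 ⟨hw.1, h0⟩
        exact hw.2 (Set.mem_biUnion (x := w) hwS (Metric.mem_ball_self (hr w)))
    filter_upwards [Metric.tendstoUniformlyOn_iff.1 (hconv _ hL) m hm] with k hk z hz h0
    have h1 := hk z hz
    rw [h0, dist_zero_right] at h1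
    exact absurd (hmb z hz) (not_le.2 h1)
  have hgood : ∀ᶠ k in atTop, ∀ a ∈ S, fk k (ζ a k) = 0 ∧
      ∀ z ∈ Metric.ball a (r a), fk k z = 0 → z = ζ a k :=
    (Finset.eventually_all S).2 fun a ha => (hζ a ha).2
  have hinj : ∀ᶠ k in atTop, ∀ a ∈ S, ∀ b ∈ S, a ≠ b → ζ a k ≠ ζ b k := by
    refine (Finset.eventually_all S).2 fun a ha => (Finset.eventually_all S).2 fun b hb => ?_
    by_cases hab : a = b
    · exact Eventually.of_forall fun _ h => absurd hab h
    · have := ((hζ a ha).1.prodMk_nhds (hζ b hb).1).eventually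
        (isClosed_diagonal.isOpen_compl.mem_nhds (x := (a, b)) (by simpa using hab))
      filter_upwards [this] with k hk _ he
      exact hk he
  have hsum : (fun k => ∑ a ∈ S, φ (ζ a k)) =ᶠ[atTop]
      (fun k => ∑ᶠ a ∈ {z : ℂ | fk k z = 0}, φ a) := by
    filter_upwards [haway, hgood, hinj] with k h1 h2 h3
    rw [← Finset.sum_image (s := S) (g := fun a => ζ a k) (f := φ)
      (fun a ha b hb he => by_contra fun hab => h3 a ha b hb hab he), ← finsum_mem_coe_finset]
    refine finsum_mem_inter_support_eq' _ _ _ fun x hx => ?_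
    have hxt := subset_tsupport φ hx
    rw [Finset.mem_coe, Finset.mem_image]
    constructor
    · rintro ⟨a, ha, rfl⟩
      exact (h2 a ha).1
    · intro hx0
      have hx0' : fk k x = 0 := hx0
      have : x ∈ ⋃ a ∈ S, Metric.ball a (r a) := by
        by_contra hn
        exact h1 x ⟨hxt, hn⟩ hx0'
      obtain ⟨a, ha, hxa⟩ := Set.mem_iUnion₂.1 this
      exact ⟨a, ha, ((h2 a ha).2 x hxa hx0').symm⟩
  rw [hlim]
  refine Tendsto.congr' hsum ?_
  exact tendsto_finsetSum S fun a ha => (hφc.tendsto a).comp (hζ a ha).1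
end

section
/- Fix n ≥ 1 and an admissible test family, and equip Conf^lf_∞(ℂ) with the sum metric d_sum. Let Conf_n(ℂ) = {(z_1,…,z_n) ∈ ℂⁿ : z_i ≠ z_j for i ≠ j} with the subspace topology and basepoint (1,2,…,n). For x = (z_1,…,z_n) ∈ Conf_n(ℂ) let R(x) = 1 + max_{1≤j≤n} |z_j|, and define i_n : Conf_n(ℂ) → Conf^lf_∞(ℂ) by i_n(z_1,…,z_n) = (z_1,…,z_n, R(x), R(x)+1, R(x)+2, …). Then i_n is well defined, continuous, sends (1,…,n) to the basepoint Ñ, and the induced homomorphism of fundamental groups (i_n)_* : π₁(Conf_n(ℂ), (1,…,n)) → π₁(Conf^lf_∞(ℂ), Ñ) is injective. -/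
open scoped Topology
open Filter

noncomputable section

/-- A subset of `ℂ` is locally finite if it meets every compact set in a finite set. -/
def LocFin (A : Set ℂ) : Prop := ∀ K : Set ℂ, IsCompact K → (A ∩ K).Finite

/-- Membership in `C^lf_∞(ℂ)`: countably infinite, locally finite subsets of `ℂ`. -/
def IsClf (A : Set ℂ) : Prop := A.Countable ∧ A.Infinite ∧ LocFin A

/-- An admissible test family `(φ_j)_{j≥1}` (indexed here by `j : ℕ`, with `φ j`
representing `φ_{j+1}`): for every `m ≥ 1` the subfamily of those `φ_j` supported in the
closed ball `K_m` is dense, for the sup norm, in the continuous compactly supported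
functions with support in `K_m`. -/
structure TestFamily where
  φ : ℕ → ℂ → ℝ
  cont : ∀ j, Continuous (φ j)
  cpt : ∀ j, HasCompactSupport (φ j)
  dense : ∀ m : ℕ, 1 ≤ m → ∀ ψ : ℂ → ℝ, Continuous ψ → HasCompactSupport ψ →
      tsupport ψ ⊆ Metric.closedBall (0 : ℂ) (m : ℝ) →
      ∀ ε : ℝ, 0 < ε → ∃ j, tsupport (φ j) ⊆ Metric.closedBall (0 : ℂ) (m : ℝ) ∧
        ∀ z, |φ j z - ψ z| ≤ ε

/-- `S_j(A) = ∑_{a∈A} φ_j(a)` (a sum with finitely many nonzero terms). -/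
def Ssum (T : TestFamily) (j : ℕ) (A : Set ℂ) : ℝ := ∑ᶠ a ∈ A, T.φ j a

/-- The vague metric `d_V(A,B) = ∑_j 2^{-j} |S_j(A)-S_j(B)| / (1+|S_j(A)-S_j(B)|)`. -/
def dV (T : TestFamily) (A B : Set ℂ) : ℝ :=
  ∑' j : ℕ, (1 / 2 : ℝ) ^ (j + 1) *
    (|Ssum T j A - Ssum T j B| / (1 + |Ssum T j A - Ssum T j B|))

/-- Ordered locally finite infinite configurations: injective sequences in `ℂ` with only
finitely many terms in each bounded disk. -/
def IsConf (x : ℕ → ℂ) : Prop :=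
  Function.Injective x ∧ ∀ R : ℝ, 0 < R → {j : ℕ | ‖x j‖ ≤ R}.Finite

/-- The product metric `d_prod(x,y) = ∑_j 2^{-j} min(|x_j - y_j|, 1)`. -/
def dProd (x y : ℕ → ℂ) : ℝ :=
  ∑' j : ℕ, (1 / 2 : ℝ) ^ (j + 1) * min ‖x j - y j‖ 1

/-- The projection `P` to the underlying unordered configuration. -/
def Pmap (x : ℕ → ℂ) : Set ℂ := Set.range x

/-- The sum metric `d_sum(x,y) = d_prod(x,y) + d_V(P(x),P(y))`. -/
def dSum (T : TestFamily) (x y : ℕ → ℂ) : ℝ :=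
  dProd x y + dV T (Pmap x) (Pmap y)

/-- The space `Conf^lf_∞(ℂ)`; the test family is carried as a (phantom) parameter so that
the metric topology of `d_sum` can be installed as a typeclass instance. -/
structure ConfSp (T : TestFamily) where
  seq : ℕ → ℂ
  prop : IsConf seq

/-- The metric topology of `d_sum`: the topology generated by its open balls. -/
instance (T : TestFamily) : TopologicalSpace (ConfSp T) :=
  TopologicalSpace.generateFrom
    {s : Set (ConfSp T) | ∃ (x : ConfSp T) (ε : ℝ), 0 < ε ∧
      s = {y : ConfSp T | dSum T x.seq y.seq < ε}}

/-- The basepoint `Ñ = (1, 2, 3, …)`. -/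
def Ntilde (T : TestFamily) : ConfSp T where
  seq := fun j => (j : ℂ) + 1
  prop := by
    constructor
    · intro a b hab
      have h : ((a : ℂ) + 1) = ((b : ℂ) + 1) := hab
      have h2 : (a : ℂ) = (b : ℂ) := by linear_combination h
      exact_mod_cast h2
    · intro R hR
      apply Set.Finite.subset (Set.finite_Iic (Nat.floor R))
      intro j hj
      simp only [Set.mem_setOf_eq] at hj
      have habs : ‖(j : ℂ) + 1‖ = (j : ℝ) + 1 := by
        rw [show ((j : ℂ) + 1) = (((j : ℝ) + 1 : ℝ) : ℂ) by push_cast; ring]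
        rw [Complex.norm_real, Real.norm_eq_abs, abs_of_nonneg (by positivity)]
      rw [habs] at hj
      have : (j : ℝ) ≤ R := by linarith
      exact Set.mem_Iic.mpr (Nat.le_floor this)

/-- The ordered configuration space `Conf_n(ℂ)` of `n` distinct points of `ℂ`,
with the subspace topology of `ℂⁿ`. -/
abbrev ConfN (n : ℕ) : Type := {z : Fin n → ℂ // Function.Injective z}

/-- `R(x) = 1 + max_j |z_j|`. -/
def Rfun (n : ℕ) (z : Fin n → ℂ) : ℝ := 1 + ⨆ j : Fin n, ‖z j‖

/-- `i_n(z_1,…,z_n) = (z_1,…,z_n, R(x), R(x)+1, R(x)+2, …)`. -/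
def iN (n : ℕ) (z : Fin n → ℂ) : ℕ → ℂ :=
  fun k => if h : k < n then z ⟨k, h⟩ else ((Rfun n z + ((k - n : ℕ) : ℝ) : ℝ) : ℂ)

lemma Rfun_eq (n : ℕ) (hn : 1 ≤ n) (z : Fin n → ℂ) : Rfun n z = 1 + ‖z‖ := by
  have : Nonempty (Fin n) := ⟨⟨0, hn⟩⟩
  unfold Rfun
  congr 1
  apply le_antisymm
  · exact ciSup_le fun j => norm_le_pi_norm z j
  · refine (pi_norm_le_iff_of_nonempty z).2 fun j => ?_
    exact le_ciSup (f := fun j => ‖z j‖) (Set.finite_range _).bddAbove j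

lemma iN_lt (n : ℕ) (z : Fin n → ℂ) (k : ℕ) (h : k < n) : iN n z k = z ⟨k, h⟩ := by
  simp [iN, h]

lemma iN_ge (n : ℕ) (hn : 1 ≤ n) (z : Fin n → ℂ) (k : ℕ) (h : n ≤ k) :
    iN n z k = ((1 + ‖z‖ + ((k : ℝ) - n) : ℝ) : ℂ) := by
  have h' : ¬ k < n := by omega
  simp only [iN, h', dite_false, Rfun_eq n hn, Nat.cast_sub h]

lemma norm_iN_ge (n : ℕ) (hn : 1 ≤ n) (z : Fin n → ℂ) (k : ℕ) (h : n ≤ k) :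
    ‖iN n z k‖ = 1 + ‖z‖ + ((k : ℝ) - n) := by
  rw [iN_ge n hn z k h, Complex.norm_real, Real.norm_eq_abs, abs_of_nonneg]
  have : (n : ℝ) ≤ k := by exact_mod_cast h
  have := norm_nonneg z
  linarith

lemma iN_conf (n : ℕ) (hn : 1 ≤ n) (z : Fin n → ℂ) (hz : Function.Injective z) :
    IsConf (iN n z) := by
  have key : ∀ a b : ℕ, a < n → n ≤ b → iN n z a ≠ iN n z b := by
    intro a b ha hb hab
    have h1 := norm_iN_ge n hn z b hb
    rw [← hab, iN_lt n z a ha] at h1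
    have h2 := norm_le_pi_norm z ⟨a, ha⟩
    have : (n : ℝ) ≤ b := by exact_mod_cast hb
    linarith
  constructor
  · intro a b hab
    rcases lt_or_ge a n with ha | ha <;> rcases lt_or_ge b n with hb | hb
    · rw [iN_lt n z a ha, iN_lt n z b hb] at hab
      simpa using hz hab
    · exact (key a b ha hb hab).elim
    · exact (key b a hb ha hab.symm).elim
    · have h1 := norm_iN_ge n hn z a ha
      rw [hab, norm_iN_ge n hn z b hb] at h1
      have : (b : ℝ) = a := by linarith
      exact_mod_cast this.symm
  · intro R hR
    apply Set.Finite.subset (Set.finite_Iic (n + Nat.floor R))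
    intro j hj
    simp only [Set.mem_setOf_eq] at hj
    rw [Set.mem_Iic]
    rcases lt_or_ge j n with h | h
    · omega
    · rw [norm_iN_ge n hn z j h] at hj
      have := norm_nonneg z
      have h3 : ((j - n : ℕ) : ℝ) ≤ R := by
        rw [Nat.cast_sub h]; linarith
      have := Nat.le_floor h3
      omega

lemma continuous_iN (n : ℕ) (hn : 1 ≤ n) (k : ℕ) :
    Continuous fun z : ConfN n => iN n z.1 k := by
  rcases lt_or_ge k n with h | h
  · simp only [iN_lt n _ k h]
    exact (continuous_apply _).comp continuous_subtype_val
  · simp only [iN_ge n hn _ k h]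
    fun_prop

lemma continuous_Ssum (T : TestFamily) (n : ℕ) (hn : 1 ≤ n) (j : ℕ) :
    Continuous fun z : ConfN n => Ssum T j (Pmap (iN n z.1)) := by
  obtain ⟨M, hM⟩ := (T.cpt j).isBounded.exists_norm_le
  have hzero : ∀ w : ℂ, M < ‖w‖ → T.φ j w = 0 := by
    intro w hw
    by_contra hne
    exact absurd (hM w (subset_tsupport _ hne)) (not_le.2 hw)
  have heq : ∀ z : ConfN n, Ssum T j (Pmap (iN n z.1)) =
      ∑ k ∈ Finset.range (n + Nat.ceil M), T.φ j (iN n z.1 k) := by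
    intro z
    unfold Ssum Pmap
    rw [finsum_mem_range (iN_conf n hn z.1 z.2).1]
    apply finsum_eq_sum_of_support_subset
    intro k hk
    rw [Finset.coe_range, Set.mem_Iio]
    by_contra hlt
    apply hk
    apply hzero
    rw [norm_iN_ge n hn _ k (by omega)]
    have h1 := Nat.le_ceil M
    have h2 : ((n + Nat.ceil M : ℕ) : ℝ) ≤ k := by exact_mod_cast not_lt.1 hlt
    push_cast at h2
    have := norm_nonneg z.1
    linarith
  simp only [heq]
  exact continuous_finsetSum _ fun k _ => (T.cont j).comp (continuous_iN n hn k)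

lemma summable_half : Summable fun j : ℕ => (1 / 2 : ℝ) ^ (j + 1) :=
  (summable_nat_add_iff 1).2 summable_geometric_two

lemma continuous_dSum (T : TestFamily) (n : ℕ) (hn : 1 ≤ n) (x : ℕ → ℂ) :
    Continuous fun z : ConfN n => dSum T x (iN n z.1) := by
  unfold dSum dProd dV
  refine Continuous.add ?_ ?_
  · refine continuous_tsum (fun j => ?_) summable_half fun j z => ?_
    · have := continuous_iN n hn j
      fun_prop
    · have h0 : 0 ≤ min ‖x j - iN n z.1 j‖ 1 := le_min (norm_nonneg _) zero_le_one
      rw [Real.norm_eq_abs, abs_of_nonneg (by positivity)]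
      exact mul_le_of_le_one_right (by positivity) (min_le_right _ _)
  · refine continuous_tsum (fun j => ?_) summable_half fun j z => ?_
    · have := continuous_Ssum T n hn j
      refine continuous_const.mul (Continuous.div (by fun_prop) (by fun_prop) fun z => ?_)
      positivity
    · rw [Real.norm_eq_abs, abs_of_nonneg (by positivity)]
      refine mul_le_of_le_one_right (by positivity) ?_
      rw [div_le_one (by positivity)]
      linarith

lemma le_dSum (T : TestFamily) (x y : ℕ → ℂ) (k : ℕ) :
    (1 / 2 : ℝ) ^ (k + 1) * min ‖x k - y k‖ 1 ≤ dSum T x y := by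
  have h0 : ∀ j, 0 ≤ (1 / 2 : ℝ) ^ (j + 1) * min ‖x j - y j‖ 1 := fun j =>
    mul_nonneg (by positivity) (le_min (norm_nonneg _) zero_le_one)
  have hs : Summable fun j : ℕ => (1 / 2 : ℝ) ^ (j + 1) * min ‖x j - y j‖ 1 :=
    Summable.of_nonneg_of_le h0
      (fun j => mul_le_of_le_one_right (by positivity) (min_le_right _ _)) summable_half
  have h1 : (1 / 2 : ℝ) ^ (k + 1) * min ‖x k - y k‖ 1 ≤ dProd x y :=
    hs.le_tsum k fun j _ => h0 j
  have h2 : 0 ≤ dV T (Pmap x) (Pmap y) := tsum_nonneg fun j => by positivity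
  unfold dSum
  linarith

lemma continuous_coord (T : TestFamily) (k : ℕ) :
    Continuous fun y : ConfSp T => y.seq k := by
  rw [continuous_iff_continuousAt]
  intro x
  rw [ContinuousAt, Metric.tendsto_nhds]
  intro ε hε
  have hpos : 0 < (1 / 2 : ℝ) ^ (k + 1) * min ε 1 :=
    mul_pos (by positivity) (lt_min hε one_pos)
  have ho : IsOpen {y : ConfSp T | dSum T x.seq y.seq < (1 / 2 : ℝ) ^ (k + 1) * min ε 1} :=
    TopologicalSpace.isOpen_generateFrom_of_mem ⟨x, _, hpos, rfl⟩
  have hx : x ∈ {y : ConfSp T | dSum T x.seq y.seq < (1 / 2 : ℝ) ^ (k + 1) * min ε 1} := by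
    have : dSum T x.seq x.seq = 0 := by simp [dSum, dProd, dV]
    simpa [this] using hε
  filter_upwards [ho.mem_nhds hx] with y hy
  have h1 := (le_dSum T x.seq y.seq k).trans_lt hy
  have h2 := lt_of_mul_lt_mul_left h1 (by positivity)
  rw [dist_comm, dist_eq_norm]
  by_contra hcon
  exact absurd (min_le_min_right 1 (not_lt.1 hcon)) (not_le.2 h2)

lemma homotopic_of_map_id {X : Type*} [TopologicalSpace X] {b : X} (γ₀ γ₁ : Path b b)
    (h : X → X) (hh : Continuous h) (hid : h = id)
    (H : Path.Homotopic (γ₀.map hh) (γ₁.map hh)) : Path.Homotopic γ₀ γ₁ := by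
  subst hid
  exact H

/-- `i_n` is well defined, continuous, sends the basepoint `(1,…,n)` to `Ñ`, and is
injective on fundamental groups: if the images of two loops at the basepoint are
(rel-endpoints) homotopic in `Conf^lf_∞(ℂ)`, then the loops are already homotopic
in `Conf_n(ℂ)`. -/
theorem iN_welldefined_continuous_pi1_injective (T : TestFamily) (n : ℕ) (hn : 1 ≤ n) :
    ∃ ins : ConfN n → ConfSp T,
      (∀ z : ConfN n, (ins z).seq = iN n z.1) ∧
      ∃ hc : Continuous ins,
        ∀ b : ConfN n, b.1 = (fun i : Fin n => ((i : ℕ) : ℂ) + 1) →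
          ins b = Ntilde T ∧
          ∀ γ₀ γ₁ : Path b b,
            Path.Homotopic (γ₀.map hc) (γ₁.map hc) → Path.Homotopic γ₀ γ₁ := by
  have hc : Continuous (fun z : ConfN n => (⟨iN n z.1, iN_conf n hn z.1 z.2⟩ : ConfSp T)) := by
    refine continuous_generateFrom_iff.2 ?_
    rintro s ⟨x, ε, hε, rfl⟩
    exact isOpen_lt (continuous_dSum T n hn x.seq) continuous_const
  refine ⟨fun z => ⟨iN n z.1, iN_conf n hn z.1 z.2⟩, fun z => rfl, hc, ?_⟩
  · intro b hb
    refine ⟨?_, ?_⟩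
    · unfold Ntilde
      refine (ConfSp.mk.injEq _ _ _ _).mpr ?_
      funext k
      rcases lt_or_ge k n with h | h
      · rw [iN_lt n _ k h, hb]
      · have hnorm : ‖b.1‖ = n := by
          have hv : ∀ i : Fin n, ‖b.1 i‖ = (i : ℕ) + 1 := by
            intro i
            rw [hb]
            have h5 := Complex.norm_natCast ((i : ℕ) + 1)
            push_cast at h5
            exact h5
          apply le_antisymm
          · refine (pi_norm_le_iff_of_nonneg (by positivity)).2 fun i => ?_
            rw [hv]
            exact_mod_cast i.2
          · have h1 := norm_le_pi_norm b.1 ⟨n - 1, by omega⟩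
            rw [hv] at h1
            have h2 : ((n - 1 : ℕ) : ℝ) + 1 = n := by
              exact_mod_cast Nat.sub_add_cancel hn
            simpa [h2] using h1
        rw [iN_ge n hn _ k h, hnorm]
        push_cast
        ring
    · intro γ₀ γ₁ H
      let p : ConfSp T → ConfN n := fun y =>
        ⟨fun i => y.seq i, fun i j hij => Fin.ext (y.prop.1 hij)⟩
      have hp : Continuous p :=
        Continuous.subtype_mk (f := fun (y : ConfSp T) (i : Fin n) => y.seq i)
          (continuous_pi fun i => continuous_coord T i) _
      have H2 := H.map ⟨p, hp⟩
      refine homotopic_of_map_id γ₀ γ₁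
        (p ∘ fun z : ConfN n => (⟨iN n z.1, iN_conf n hn z.1 z.2⟩ : ConfSp T)) (hp.comp hc) ?_ H2
      funext z
      apply Subtype.ext
      funext i
      exact iN_lt n z.1 i i.2
end
end

section
/- Fix an admissible test family. Then the metric space (C^lf_∞(ℂ), d_V) is path-connected. -/
open scoped Topology
open Filter

noncomputable section

/-- The space `C^lf_∞(ℂ)`; the test family is carried as a (phantom) parameter so that
the metric topology of `d_V` can be installed as a typeclass instance. -/
structure ClfSp (T : TestFamily) where
  carrier : Set ℂ
  prop : IsClf carrier

/-- The metric topology of `d_V`: the topology generated by its open balls. -/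
instance (T : TestFamily) : TopologicalSpace (ClfSp T) :=
  TopologicalSpace.generateFrom
    {s : Set (ClfSp T) | ∃ (A : ClfSp T) (ε : ℝ), 0 < ε ∧
      s = {B : ClfSp T | dV T A.carrier B.carrier < ε}}

lemma continuous_of_Ssum {X : Type*} [TopologicalSpace X] (T : TestFamily) (f : X → ClfSp T)
    (h : ∀ j, Continuous fun x => Ssum T j (f x).carrier) : Continuous f := by
  refine continuous_generateFrom_iff.2 ?_
  rintro s ⟨A, ε, hε, rfl⟩
  have hc : Continuous fun x => dV T A.carrier (f x).carrier := by
    unfold dV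
    refine continuous_tsum (u := fun j : ℕ => (1 / 2 : ℝ) ^ (j + 1)) ?_ ?_ ?_
    · intro j
      have h1 : Continuous fun x => |Ssum T j A.carrier - Ssum T j (f x).carrier| :=
        (continuous_const.sub (h j)).abs
      refine continuous_const.mul (h1.div (continuous_const.add h1) ?_)
      intro x
      positivity
    · exact (summable_nat_add_iff 1).2 summable_geometric_two
    · intro j x
      rw [Real.norm_of_nonneg (by positivity)]
      refine mul_le_of_le_one_right (by positivity) ?_
      rw [div_le_one (by positivity)]
      linarith
  exact isOpen_lt hc continuous_const

/-- scaling factor -/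
def wfac (y s : ℝ) : ℂ := ⟨1 / s, y * (1 / s - 1)⟩

/-- moving map -/
def gmap (p : ℂ) (y s : ℝ) (c : ℂ) : ℂ := p + wfac y s * (c - p)

lemma wfac_norm (y s : ℝ) (hs : 0 < s) : 1 / s ≤ ‖wfac y s‖ := by
  have := Complex.abs_re_le_norm (wfac y s)
  exact (le_abs_self _).trans this

lemma wfac_ne (y s : ℝ) (hs : 0 < s) : wfac y s ≠ 0 := by
  have := wfac_norm y s hs
  have h2 : 0 < 1 / s := by positivity
  exact norm_pos_iff.1 (h2.trans_le this)

lemma wfac_one (y : ℝ) : wfac y 1 = 1 := by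
  apply Complex.ext <;> simp [wfac]

lemma gmap_inj (p : ℂ) (y s : ℝ) (hs : 0 < s) : Function.Injective (gmap p y s) := by
  intro a b h
  have := mul_left_cancel₀ (wfac_ne y s hs) (add_left_cancel h)
  exact sub_left_injective this

lemma gmap_dist (p : ℂ) (y s : ℝ) (hs : 0 < s) (c : ℂ) :
    ‖c - p‖ * (1 / s) ≤ dist (gmap p y s c) p := by
  rw [dist_eq_norm, gmap, add_sub_cancel_left, norm_mul, mul_comm]
  exact mul_le_mul_of_nonneg_right (wfac_norm y s hs) (norm_nonneg _)

lemma gmap_dist' (p : ℂ) (y s : ℝ) (hs : 0 < s) (hs1 : s ≤ 1) (c : ℂ) :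
    dist c p ≤ dist (gmap p y s c) p := by
  refine le_trans ?_ (gmap_dist p y s hs c)
  rw [dist_eq_norm]
  refine le_mul_of_one_le_right (norm_nonneg _) ?_
  rw [le_div_iff₀ hs]
  linarith

/-- moving set -/
def Mset (C : Set ℂ) (p : ℂ) (y s : ℝ) : Set ℂ := {z | 0 < s ∧ ∃ c ∈ C, gmap p y s c = z}

lemma Mset_pos (C : Set ℂ) (p : ℂ) (y s : ℝ) (hs : 0 < s) :
    Mset C p y s = gmap p y s '' C := by
  ext z; simp [Mset, hs]

lemma Mset_zero (C : Set ℂ) (p : ℂ) (y : ℝ) : Mset C p y 0 = ∅ := by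
  ext z; simp [Mset]

lemma Mset_one (C : Set ℂ) (p : ℂ) (y : ℝ) : Mset C p y 1 = C := by
  ext z; simp [Mset, gmap, wfac_one]

lemma Mset_countable (C : Set ℂ) (hC : C.Countable) (p : ℂ) (y s : ℝ) :
    (Mset C p y s).Countable :=
  (hC.image (gmap p y s)).mono (by rintro z ⟨_, c, hc, rfl⟩; exact ⟨c, hc, rfl⟩)

lemma Mset_locFin (C : Set ℂ) (hC : LocFin C) (p : ℂ) (y s : ℝ) (hs1 : s ≤ 1) :
    LocFin (Mset C p y s) := by
  intro K hK
  obtain ⟨R, hR⟩ := hK.isBounded.subset_closedBall p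
  refine ((hC _ (isCompact_closedBall p R)).image (gmap p y s)).subset ?_
  rintro z ⟨⟨hs, c, hc, rfl⟩, hz⟩
  exact ⟨c, ⟨hc, (gmap_dist' p y s hs hs1 c).trans (hR hz)⟩, rfl⟩

lemma locFin_union {A B : Set ℂ} (hA : LocFin A) (hB : LocFin B) : LocFin (A ∪ B) := by
  intro K hK
  rw [Set.union_inter_distrib_right]
  exact (hA K hK).union (hB K hK)

lemma exists_params (A C : Set ℂ) (hA : A.Countable) (hC : C.Countable) (hd : Disjoint A C) :
    ∃ (p : ℂ) (y : ℝ), p ∉ C ∧ ∀ s, 0 ≤ s → s ≤ 1 → Disjoint A (Mset C p y s) := by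
  obtain ⟨p, hp⟩ : ∃ p, p ∉ C := by
    by_contra! h
    exact not_countable_complex (hC.mono fun x _ => h x)
  let q : ℂ × ℂ → ℝ := fun x => ((x.1 - x.2) / (x.2 - p)).im / ((x.1 - x.2) / (x.2 - p)).re
  obtain ⟨y, hy⟩ : ∃ y, y ∉ q '' (A ×ˢ C) := by
    by_contra! h
    exact Set.not_countable_univ (α := ℝ) (((hA.prod hC).image q).mono fun x _ => h x)
  refine ⟨p, y, hp, fun s hs0 hs1 => Set.disjoint_left.2 ?_⟩
  rintro a ha ⟨hs, c, hc, rfl⟩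
  have hcp : c - p ≠ 0 := fun h => hp (by rwa [← sub_eq_zero.1 h])
  have hne : gmap p y s c ≠ c := fun h => Set.disjoint_left.1 hd ha (by rwa [h])
  apply hy
  refine ⟨(gmap p y s c, c), ⟨ha, hc⟩, ?_⟩
  have e : (gmap p y s c - c) / (c - p) = wfac y s - 1 := by
    rw [div_eq_iff hcp, gmap]; ring
  have hs2 : 1 / s - 1 ≠ 0 := by
    intro h
    have : s = 1 := by
      field_simp at h
      linarith
    subst this
    apply hne
    simp [gmap, wfac_one]
  simp only [q, e]
  simp only [wfac, Complex.sub_re, Complex.sub_im, Complex.one_re, Complex.one_im, sub_zero]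
  exact mul_div_cancel_right₀ y hs2

lemma term_cont (T : TestFamily) (j : ℕ) (p : ℂ) (y : ℝ) (c : ℂ) (hc : c ≠ p) :
    Continuous fun s : unitInterval =>
      if 0 < (s : ℝ) then T.φ j (gmap p y s c) else 0 := by
  rw [continuous_iff_continuousAt]
  intro s
  rcases s.2.1.lt_or_eq with hs | hs
  · have hev : ∀ᶠ t : unitInterval in 𝓝 s, 0 < (t : ℝ) :=
      continuous_subtype_val.continuousAt.eventually (lt_mem_nhds hs)
    have h1 : ContinuousAt (fun t : unitInterval => T.φ j (gmap p y t c)) s := by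
      refine (T.cont j).continuousAt.comp ?_
      have h2 : ContinuousAt (fun t : unitInterval => 1 / (t : ℝ)) s :=
        continuousAt_const.div continuous_subtype_val.continuousAt hs.ne'
      have h3 : (fun t : unitInterval => gmap p y t c) = fun t : unitInterval =>
          p + (((1 / (t : ℝ) : ℝ) : ℂ) + ((y * (1 / (t : ℝ) - 1) : ℝ) : ℂ) * Complex.I)
            * (c - p) := by
        funext t
        rw [gmap, wfac, Complex.mk_eq_add_mul_I]
      rw [h3]
      refine continuousAt_const.add (ContinuousAt.mul (ContinuousAt.add ?_ ?_) continuousAt_const)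
      · exact Complex.continuous_ofReal.continuousAt.comp h2
      · refine ContinuousAt.mul ?_ continuousAt_const
        exact Complex.continuous_ofReal.continuousAt.comp
          (continuousAt_const.mul (h2.sub continuousAt_const))
    refine h1.congr ?_
    filter_upwards [hev] with t ht
    rw [if_pos ht]
  · obtain ⟨R, hR⟩ := (T.cpt j).isCompact.isBounded.subset_closedBall p
    have hpos : 0 < ‖c - p‖ := norm_pos_iff.2 (sub_ne_zero.2 hc)
    have hev : ∀ᶠ t : unitInterval in 𝓝 s, (t : ℝ) * R < ‖c - p‖ := by
      have : ContinuousAt (fun t : unitInterval => (t : ℝ) * R) s :=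
        (continuous_subtype_val.mul continuous_const).continuousAt
      refine this.eventually (gt_mem_nhds ?_)
      simpa only [← hs, zero_mul] using hpos
    refine (continuousAt_const (y := (0 : ℝ))).congr ?_
    filter_upwards [hev] with t ht
    split_ifs with h0
    · symm
      by_contra hne
      have := hR (subset_tsupport _ hne)
      have h2 := (gmap_dist p y t h0 c).trans this
      rw [mul_one_div, div_le_iff₀ h0] at h2
      linarith
    · rfl

lemma supp_fin (T : TestFamily) (j : ℕ) {A : Set ℂ} (hA : LocFin A) :
    (A ∩ Function.support (T.φ j)).Finite :=
  (hA _ (T.cpt j).isCompact).subset (Set.inter_subset_inter_right _ (subset_tsupport _))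

lemma Ssum_Mset_cont (T : TestFamily) (j : ℕ) (C : Set ℂ) (hC : LocFin C) (p : ℂ) (hp : p ∉ C)
    (y : ℝ) : Continuous fun s : unitInterval => Ssum T j (Mset C p y s) := by
  obtain ⟨R, hR⟩ := (T.cpt j).isCompact.isBounded.subset_closedBall p
  have hF := hC _ (isCompact_closedBall p R)
  have key : (fun s : unitInterval => Ssum T j (Mset C p y s)) = fun s : unitInterval =>
      ∑ c ∈ hF.toFinset, if 0 < (s : ℝ) then T.φ j (gmap p y s c) else 0 := by
    funext s
    rcases s.2.1.lt_or_eq with hs | hs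
    · simp only [if_pos hs]
      rw [Ssum, Mset_pos _ _ _ _ hs, finsum_mem_image (gmap_inj p y s hs).injOn]
      refine finsum_mem_eq_sum_of_inter_support_eq _ ?_
      ext c
      simp only [Set.mem_inter_iff, Function.mem_support, Set.Finite.coe_toFinset]
      constructor
      · rintro ⟨hc, h⟩
        exact ⟨⟨hc, (gmap_dist' p y s hs s.2.2 c).trans (hR (subset_tsupport _ h))⟩, h⟩
      · rintro ⟨⟨hc, _⟩, h⟩
        exact ⟨hc, h⟩
    · rw [← hs, Mset_zero]
      simp [Ssum]
  rw [key]
  refine continuous_finsetSum _ fun c hc => term_cont T j p y c ?_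
  rintro rfl
  exact hp (by simpa using (hF.mem_toFinset.1 hc).1)

lemma joined_union (T : TestFamily) (A B : ClfSp T) (C : Set ℂ) (hC : C.Countable) (hl : LocFin C)
    (hd : Disjoint A.carrier C) (hB : B.carrier = A.carrier ∪ C) : Joined A B := by
  obtain ⟨p, y, hp, hdis⟩ := exists_params A.carrier C A.prop.1 hC hd
  let f : unitInterval → ClfSp T := fun s => ⟨A.carrier ∪ Mset C p y s,
    A.prop.1.union (Mset_countable C hC p y s), A.prop.2.1.mono Set.subset_union_left,
    locFin_union A.prop.2.2 (Mset_locFin C hl p y s s.2.2)⟩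
  have hf : Continuous f := by
    refine continuous_of_Ssum T f fun j => ?_
    have : (fun s => Ssum T j (f s).carrier) =
        fun s : unitInterval => Ssum T j A.carrier + Ssum T j (Mset C p y s) := by
      funext s
      exact finsum_mem_union' (hdis s s.2.1 s.2.2) (supp_fin T j A.prop.2.2)
        (supp_fin T j (Mset_locFin C hl p y s s.2.2))
    rw [this]
    exact continuous_const.add (Ssum_Mset_cont T j C hl p hp y)
  refine ⟨⟨⟨f, hf⟩, ?_, ?_⟩⟩
  · cases A
    simp [f, Mset_zero]
  · cases B
    simp only at hB
    simp [f, Mset_one, hB]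

/-- The metric space `(C^lf_∞(ℂ), d_V)` is path-connected. -/
theorem clfSp_pathConnected (T : TestFamily) : PathConnectedSpace (ClfSp T) := by
  have sub : ∀ (A : ClfSp T) (D : Set ℂ), (A.carrier \ D).Countable ∧ LocFin (A.carrier \ D) :=
    fun A D => ⟨A.prop.1.mono Set.diff_subset, fun K hK => (A.prop.2.2 K hK).subset
      (Set.inter_subset_inter_left _ Set.diff_subset)⟩
  refine ⟨⟨⟨Set.range fun n : ℕ => (n : ℂ), Set.countable_range _,
    Set.infinite_range_of_injective Nat.cast_injective, ?_⟩⟩, ?_⟩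
  · intro K hK
    obtain ⟨R, hR⟩ := hK.isBounded.subset_closedBall 0
    refine ((Set.finite_Iic ⌊R⌋₊).image fun n : ℕ => (n : ℂ)).subset ?_
    rintro z ⟨⟨n, rfl⟩, hz⟩
    refine ⟨n, ?_, rfl⟩
    have := hR hz
    simp at this
    exact Nat.le_floor this
  · intro A B
    let U : ClfSp T := ⟨A.carrier ∪ B.carrier, A.prop.1.union B.prop.1,
      A.prop.2.1.mono Set.subset_union_left, locFin_union A.prop.2.2 B.prop.2.2⟩
    have h1 : Joined A U := joined_union T A U (B.carrier \ A.carrier) (sub B _).1 (sub B _).2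
      Set.disjoint_sdiff_right (by simp [U])
    have h2 : Joined B U := joined_union T B U (A.carrier \ B.carrier) (sub A _).1 (sub A _).2
      Set.disjoint_sdiff_right (by simp [U, Set.union_comm])
    exact h1.trans h2.symm
end
end

section
/- Let U ⊆ ℂ be open and let γ : [0,1] → U be continuous. Then there exists a continuous map Ψ : [0,1] × ℂ → ℂ such that, writing Ψ_t := Ψ(t, ·): (1) Ψ_0 is the identity of ℂ; (2) each Ψ_t is a homeomorphism of ℂ; (3) Ψ_t(γ(0)) = γ(t) for all t ∈ [0,1]; (4) Ψ_t(z) = z for all t ∈ [0,1] and all z ∈ ℂ \ U. -/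
open unitInterval

lemma push_exists (ε : ℝ) (hε : 0 < ε) (c v : ℂ) (hv : ‖v‖ ≤ ε / 2) :
    ∃ P : ℂ ≃ₜ ℂ, ∀ z, P z = z + ((max 0 (1 - ‖z - c‖ / ε) : ℝ) : ℂ) * v := by
  have h : ApproximatesLinearOn (fun z : ℂ => z + ((max 0 (1 - ‖z - c‖ / ε) : ℝ) : ℂ) * v)
      ((ContinuousLinearEquiv.refl ℝ ℂ : ℂ ≃L[ℝ] ℂ) : ℂ →L[ℝ] ℂ) Set.univ (1/2) := by
    intro x _ y _
    simp only [ContinuousLinearEquiv.coe_refl, ContinuousLinearMap.coe_id', id]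
    have e : x + ((max 0 (1 - ‖x - c‖ / ε) : ℝ) : ℂ) * v
        - (y + ((max 0 (1 - ‖y - c‖ / ε) : ℝ) : ℂ) * v) - (x - y)
        = ((max 0 (1 - ‖x - c‖ / ε) - max 0 (1 - ‖y - c‖ / ε) : ℝ) : ℂ) * v := by
      push_cast; ring
    have e' : ((ContinuousLinearMap.id ℝ ℂ) (x - y)) = x - y := rfl
    try rw [e']
    rw [e, norm_mul, Complex.norm_real, Real.norm_eq_abs]
    have h1 : |max 0 (1 - ‖x - c‖ / ε) - max 0 (1 - ‖y - c‖ / ε)| ≤ ‖x - y‖ / ε := by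
      have a1 := abs_max_sub_max_le_abs (1 - ‖x - c‖ / ε) (1 - ‖y - c‖ / ε) 0
      rw [max_comm, max_comm 0 (1 - ‖y - c‖ / ε)]
      refine a1.trans ?_
      have a2 : 1 - ‖x - c‖ / ε - (1 - ‖y - c‖ / ε) = (‖y - c‖ - ‖x - c‖) / ε := by ring
      rw [a2, abs_div, abs_of_pos hε]
      gcongr
      have := abs_norm_sub_norm_le (y - c) (x - c)
      rw [norm_sub_rev x y]
      simpa using this
    calc _ ≤ ‖x - y‖ / ε * (ε / 2) := by gcongr
      _ = _ := by
        push_cast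
        field_simp
  refine ⟨h.toHomeomorph _ (Or.inr ?_), fun z => ?_⟩
  · have : ‖((ContinuousLinearEquiv.refl ℝ ℂ).symm : ℂ →L[ℝ] ℂ)‖₊ = 1 := by
      ext
      exact ContinuousLinearMap.norm_id
    rw [this, inv_one]
    exact NNReal.half_lt_self one_ne_zero
  · rfl

theorem one_point_isotopy (U : Set ℂ) (hU : IsOpen U) (γ : unitInterval → ℂ)
    (hγ : Continuous γ) (hγU : ∀ t, γ t ∈ U) :
    ∃ Ψ : unitInterval → ℂ ≃ₜ ℂ,
      Continuous (fun p : unitInterval × ℂ => Ψ p.1 p.2) ∧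
      (∀ z : ℂ, Ψ 0 z = z) ∧
      (∀ t, Ψ t (γ 0) = γ t) ∧
      (∀ t, ∀ z : ℂ, z ∉ U → Ψ t z = z) := by
  obtain ⟨ε, hε, hεU⟩ : ∃ ε > 0, Metric.thickening ε (Set.range γ) ⊆ U :=
    (isCompact_range hγ).exists_thickening_subset_open hU (by rintro _ ⟨t, rfl⟩; exact hγU t)
  have huc : UniformContinuous γ := CompactSpace.uniformContinuous_of_continuous hγ
  obtain ⟨δ, hδ, hd⟩ := Metric.uniformContinuous_iff.1 huc (ε/2) (by positivity)
  obtain ⟨N, hN⟩ := exists_nat_gt (1 / (δ/2))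
  let g : ℕ → unitInterval → unitInterval := fun n t => Set.projIcc 0 1 zero_le_one (min (t:ℝ) (n * (δ/2)))
  have hg : ∀ n, Continuous (g n) := fun n => by
    refine continuous_projIcc.comp ?_
    fun_prop
  have hg0 : ∀ n, g n 0 = 0 := fun n => by
    have : min (((0:unitInterval):ℝ)) (n * (δ/2)) = 0 := by
      simp only [Set.Icc.coe_zero]; exact min_eq_left (by positivity)
    simp only [g]; rw [this]; simp
  have hgz : ∀ t, g 0 t = 0 := fun t => by
    have : min (t:ℝ) ((0:ℕ) * (δ/2)) = 0 := by
      simp [t.2.1]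
    simp only [g]; rw [this]; simp
  have hgN : ∀ t, g N t = t := fun t => by
    have : min (t:ℝ) (N * (δ/2)) = t := by
      apply min_eq_left
      rw [div_lt_iff₀ (by positivity)] at hN
      exact t.2.2.trans hN.le
    simp only [g]; rw [this]; simp
  have hv : ∀ n t, ‖γ (g (n+1) t) - γ (g n t)‖ ≤ ε / 2 := fun n t => by
    rw [← dist_eq_norm]
    refine (hd ?_).le
    have h1 : dist (g (n+1) t) (g n t) ≤ dist (min (t:ℝ) ((n+1:ℕ) * (δ/2))) (min (t:ℝ) (n * (δ/2))) := by
      rw [Subtype.dist_eq, Real.dist_eq, Real.dist_eq]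
      exact Set.abs_projIcc_sub_projIcc _
    refine h1.trans_lt ?_
    rw [Real.dist_eq, min_comm, min_comm (t:ℝ)]
    refine (abs_min_sub_min_le_max _ _ _ _).trans_lt ?_
    push_cast
    rw [show ((n:ℝ)+1) * (δ/2) - n * (δ/2) = δ/2 by ring, abs_of_pos (by positivity)]
    simp
    exact hδ
  choose P hP using fun n t => push_exists ε hε (γ (g n t)) _ (hv n t)
  let Φ : ℕ → unitInterval → ℂ ≃ₜ ℂ := fun n t =>
    Nat.rec (Homeomorph.refl ℂ) (fun k h => h.trans (P k t)) n
  have hΦ : ∀ n t z, Φ (n+1) t z = P n t (Φ n t z) := fun _ _ _ => rfl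
  have hΦ0 : ∀ t z, Φ 0 t z = z := fun _ _ => rfl
  refine ⟨Φ N, ?_, ?_, ?_, ?_⟩
  · generalize N = n
    induction n with
    | zero => exact continuous_snd
    | succ n ih =>
      simp only [hΦ, hP]
      have := hg n
      have := hg (n+1)
      fun_prop
  · generalize N = n
    intro z
    induction n with
    | zero => rfl
    | succ n ih => rw [hΦ, ih, hP, hg0, hg0]; simp
  · intro t
    have : ∀ n, Φ n t (γ 0) = γ (g n t) := fun n => by
      induction n with
      | zero => rw [hgz]; rfl
      | succ n ih => rw [hΦ, ih, hP]; simp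
    rw [this, hgN]
  · generalize N = n
    intro t z hz
    induction n with
    | zero => rfl
    | succ n ih =>
      rw [hΦ, ih, hP]
      have h1 : ε ≤ ‖z - γ (g n t)‖ := by
        by_contra! h
        exact hz (hεU (Metric.mem_thickening_iff.2 ⟨_, ⟨_, rfl⟩, by rwa [dist_eq_norm]⟩))
      have h2 : 1 ≤ ‖z - γ (g n t)‖ / ε := (one_le_div hε).2 h1
      rw [max_eq_left (by linarith)]
      simp
end

section
/- Let K be a compact topological space and let F : K → C^lf_∞(ℂ) be vaguely continuous. Then for every compact set B ⊆ ℂ there exists an integer N ≥ 0 such that the cardinality of F(x) ∩ B is at most N for every x ∈ K. -/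
open scoped Topology
open Filter

noncomputable section

/-- A map into `C^lf_∞(ℂ)` is vaguely continuous if all test sums against continuous
compactly supported functions are continuous. -/
def VaguelyContinuous {X : Type*} [TopologicalSpace X] (F : X → Set ℂ) : Prop :=
  ∀ φ : ℂ → ℝ, Continuous φ → HasCompactSupport φ →
    Continuous (fun x => ∑ᶠ a ∈ F x, φ a)

/-- Uniform bound on points in a compact set: if `K` is compact and
`F : K → C^lf_∞(ℂ)` is vaguely continuous, then for every compact `B ⊆ ℂ` there is
`N` with `#(F(x) ∩ B) ≤ N` for all `x ∈ K`. -/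
theorem uniform_bound_on_compacta (K : Type*) [TopologicalSpace K] [CompactSpace K]
    (F : K → Set ℂ) (hF : ∀ x, IsClf (F x)) (hFc : VaguelyContinuous F)
    (B : Set ℂ) (hB : IsCompact B) :
    ∃ N : ℕ, ∀ x : K, (F x ∩ B).ncard ≤ N := by
  obtain ⟨f, hf1, -, hfc, hf01⟩ := exists_continuous_one_zero_of_isCompact hB
    (isClosed_empty (X := ℂ)) (Set.disjoint_empty B)
  have hcont := hFc f f.continuous hfc
  obtain ⟨C, hC⟩ := (isCompact_range hcont).bddAbove
  obtain ⟨N, hN⟩ := exists_nat_ge C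
  refine ⟨N, fun x => ?_⟩
  have h1 : (F x ∩ tsupport f).Finite := (hF x).2.2 _ hfc
  have h2 : (F x ∩ B).Finite := (hF x).2.2 _ hB
  have hsub : F x ∩ B ⊆ F x ∩ tsupport f := by
    rintro a ⟨ha, hb⟩
    refine ⟨ha, subset_tsupport _ ?_⟩
    have : f a = 1 := hf1 hb
    simp [this]
  have e : ∑ᶠ a ∈ F x, f a = ∑ a ∈ h1.toFinset, f a := by
    apply finsum_mem_eq_sum_of_inter_support_eq
    ext a
    have := @subset_tsupport _ _ _ _ f a
    simp only [Set.mem_inter_iff, Set.Finite.coe_toFinset] at *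
    tauto
  have h3 : ((F x ∩ B).ncard : ℝ) ≤ N := by
    rw [Set.ncard_eq_toFinset_card _ h2]
    calc ((h2.toFinset.card : ℕ) : ℝ) = ∑ a ∈ h2.toFinset, f a := by
          rw [Finset.sum_congr rfl (g := fun _ => (1:ℝ))]
          · simp
          · intro a ha
            exact hf1 ((h2.mem_toFinset.1 ha).2)
      _ ≤ ∑ a ∈ h1.toFinset, f a := by
          apply Finset.sum_le_sum_of_subset_of_nonneg
          · simpa using hsub
          · intro a _ _
            exact (hf01 a).1
      _ = ∑ᶠ a ∈ F x, f a := e.symm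
      _ ≤ C := hC ⟨x, rfl⟩
      _ ≤ N := hN
  exact_mod_cast h3
end
end

section
/- Let K be a compact topological space, let F : K → C^lf_∞(ℂ) be vaguely continuous, and let Φ : K × [0,1] × ℂ → ℂ be continuous such that (1) for every (x,t) ∈ K × [0,1] the map Φ_{x,t} := Φ(x,t,·) : ℂ → ℂ is a homeomorphism, and (2) there exists a compact set S ⊆ ℂ with Φ_{x,t}(z) = z for all (x,t) ∈ K × [0,1] and all z ∈ ℂ \ S. Then for each (x,t) the image set {Φ_{x,t}(a) : a ∈ F(x)} belongs to C^lf_∞(ℂ), and the map H : K × [0,1] → C^lf_∞(ℂ), H(x,t) = {Φ_{x,t}(a) : a ∈ F(x)}, is vaguely continuous; that is, for every φ ∈ C_c(ℂ) the function (x,t) ↦ ∑_{a∈F(x)} φ(Φ(x,t,a)) is continuous on K × [0,1]. -/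
open scoped Topology
open Filter

noncomputable section

theorem finsum_aux {A : Set ℂ} {M : Set ℂ} (h : (A ∩ M).Finite) (f : ℂ → ℝ)
    (hf : ∀ z, z ∉ M → f z = 0) : ∑ᶠ a ∈ A, f a = ∑ a ∈ h.toFinset, f a := by
  apply finsum_mem_eq_sum_of_inter_support_eq
  ext z
  simp only [Set.mem_inter_iff, Function.mem_support, Set.Finite.coe_toFinset]
  constructor
  · rintro ⟨h1, h2⟩
    exact ⟨⟨h1, by_contra fun h3 => h2 (hf z h3)⟩, h2⟩
  · rintro ⟨h1, h2⟩
    exact ⟨h1.1, h2⟩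

/-- Pushing a vaguely continuous family of configurations by a parametrized, compactly
supported family of homeomorphisms of `ℂ` stays in `C^lf_∞(ℂ)` and is jointly vaguely
continuous. -/
theorem param_push_vaguely_continuous (K : Type*) [TopologicalSpace K] [CompactSpace K]
    (F : K → Set ℂ) (hF : ∀ x, IsClf (F x)) (hFc : VaguelyContinuous F)
    (Φ : K × unitInterval × ℂ → ℂ) (hΦ : Continuous Φ)
    (hhomeo : ∀ (x : K) (t : unitInterval), ∃ H : ℂ ≃ₜ ℂ, ∀ z, H z = Φ (x, t, z))
    (S : Set ℂ) (hS : IsCompact S)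
    (hsupp : ∀ (x : K) (t : unitInterval) (z : ℂ), z ∉ S → Φ (x, t, z) = z) :
    (∀ (x : K) (t : unitInterval), IsClf ((fun a => Φ (x, t, a)) '' F x)) ∧
    ∀ φ : ℂ → ℝ, Continuous φ → HasCompactSupport φ →
      Continuous (fun p : K × unitInterval => ∑ᶠ a ∈ F p.1, φ (Φ (p.1, p.2, a))) := by
  refine ⟨?_, ?_⟩
  · intro x t
    obtain ⟨H, hH⟩ := hhomeo x t
    have e : (fun a => Φ (x, t, a)) = H := by
      funext z; exact (hH z).symm
    rw [e]
    obtain ⟨h1, h2, h3⟩ := hF x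
    refine ⟨h1.image _, h2.image H.injective.injOn, ?_⟩
    intro C hC
    have hC' : IsCompact (H ⁻¹' C) := H.isCompact_preimage.2 hC
    refine ((h3 _ hC').image H).subset ?_
    rintro _ ⟨⟨a, ha, rfl⟩, hc⟩
    exact ⟨a, ⟨ha, hc⟩, rfl⟩
  · intro φ hφ hφc
    have hL : IsCompact (S ∪ tsupport φ) := hS.union hφc
    have hz : ∀ (p : K × unitInterval) (z : ℂ), z ∉ S ∪ tsupport φ →
        φ (Φ (p.1, p.2, z)) = 0 := by
      intro p z h
      rw [hsupp p.1 p.2 z (fun h' => h (Or.inl h'))]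
      exact image_eq_zero_of_notMem_tsupport (fun h' => h (Or.inr h'))
    generalize S ∪ tsupport φ = L at hL hz
    obtain ⟨χ, hχ1, -, hχc, hχ01⟩ := exists_continuous_one_zero_of_isCompact hL
      isClosed_empty (Set.disjoint_empty L)
    have hcχ := hFc χ χ.continuous hχc
    rw [continuous_iff_continuousAt]
    intro p₀
    have hψ : Continuous (fun z => φ (Φ (p₀.1, p₀.2, z))) := by fun_prop
    have hcψ := hFc _ hψ (HasCompactSupport.intro hL (hz p₀))
    have hB : ∀ᶠ p : K × unitInterval in 𝓝 p₀,
        ∑ᶠ a ∈ F p.1, χ a < (∑ᶠ a ∈ F p₀.1, χ a) + 1 :=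
      (hcχ.comp continuous_fst).continuousAt.eventually_lt continuousAt_const
        (by simp)
    have hB0 : 0 ≤ ∑ᶠ a ∈ F p₀.1, χ a :=
      finsum_nonneg fun a => finsum_nonneg fun _ => (hχ01 a).1
    generalize ∑ᶠ a ∈ F p₀.1, χ a = B at hB hB0
    unfold ContinuousAt
    rw [Metric.tendsto_nhds]
    intro ε hε
    have h1 : ∀ᶠ p : K × unitInterval in 𝓝 p₀,
        |∑ᶠ a ∈ F p.1, φ (Φ (p₀.1, p₀.2, a)) - ∑ᶠ a ∈ F p₀.1, φ (Φ (p₀.1, p₀.2, a))| < ε / 2 := by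
      have := Metric.tendsto_nhds.1 ((hcψ.comp continuous_fst).tendsto p₀)
        (ε / 2) (half_pos hε)
      simpa [Real.dist_eq] using this
    have hδ : 0 < ε / 2 / (B + 1) := by positivity
    have h2 : ∀ᶠ p : K × unitInterval in 𝓝 p₀, ∀ z ∈ L,
        |φ (Φ (p.1, p.2, z)) - φ (Φ (p₀.1, p₀.2, z))| < ε / 2 / (B + 1) := by
      apply hL.eventually_forall_of_forall_eventually
      intro z _
      have hc : Continuous (fun q : (K × unitInterval) × ℂ =>
        |φ (Φ (q.1.1, q.1.2, q.2)) - φ (Φ (p₀.1, p₀.2, q.2))|) := by fun_prop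
      exact hc.continuousAt.eventually_lt continuousAt_const (by simpa using hδ)
    filter_upwards [hB, h1, h2] with p hb h1 h2
    rw [Real.dist_eq]
    have hfin := (hF p.1).2.2 _ hχc.isCompact
    have hLM : ∀ z, z ∉ tsupport χ → z ∉ L := by
      intro z h h'
      have := image_eq_zero_of_notMem_tsupport h
      rw [hχ1 h'] at this
      simp at this
    have key : |∑ᶠ a ∈ F p.1, φ (Φ (p.1, p.2, a)) - ∑ᶠ a ∈ F p.1, φ (Φ (p₀.1, p₀.2, a))|
        ≤ ε / 2 / (B + 1) * ∑ᶠ a ∈ F p.1, χ a := by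
      rw [finsum_aux hfin _ (fun z h => hz p z (hLM z h)),
        finsum_aux hfin _ (fun z h => hz p₀ z (hLM z h)),
        finsum_aux hfin _ (fun z h => image_eq_zero_of_notMem_tsupport h),
        ← Finset.sum_sub_distrib, Finset.mul_sum]
      refine (Finset.abs_sum_le_sum_abs _ _).trans (Finset.sum_le_sum fun z _ => ?_)
      by_cases h : z ∈ L
      · rw [hχ1 h]
        simpa using (h2 z h).le
      · rw [hz p z h, hz p₀ z h]
        simpa using mul_nonneg hδ.le (hχ01 z).1
    have key2 : ε / 2 / (B + 1) * ∑ᶠ a ∈ F p.1, χ a ≤ ε / 2 := by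
      calc _ ≤ ε / 2 / (B + 1) * (B + 1) := mul_le_mul_of_nonneg_left hb.le hδ.le
        _ = ε / 2 := by field_simp
    rw [abs_lt] at h1 ⊢
    have := abs_le.1 (key.trans key2)
    constructor <;> linarith [this.1, this.2, h1.1, h1.2]
end
end

section
/- Let K be a compact topological space, let F : K → C^lf_∞(ℂ) be vaguely continuous, and let B ⊆ ℂ be a compact set such that F(x) ∩ ∂B = ∅ for every x ∈ K, where ∂B denotes the topological boundary of B. Then the function x ↦ #(F(x) ∩ B) ∈ ℕ is locally constant on K; in particular it is constant on every connected component of K. -/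
open scoped Topology
open Filter

noncomputable section

open Classical in
lemma clc_aux {A : Set ℂ} (hA : LocFin A) {φ : ℂ → ℝ} (hφ : HasCompactSupport φ)
    {B : Set ℂ} (hB : IsCompact B) :
    ∃ S : Finset ℂ, (∀ a ∈ S, a ∈ A) ∧ (∑ᶠ a ∈ A, φ a = ∑ a ∈ S, φ a) ∧
      ((A ∩ B).ncard : ℝ) = ∑ a ∈ S, if a ∈ B then (1 : ℝ) else 0 := by
  have hfin := hA (tsupport φ ∪ B) (hφ.isCompact.union hB)
  refine ⟨hfin.toFinset, ?_, ?_, ?_⟩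
  · intro a ha
    exact ((Set.Finite.mem_toFinset hfin).1 ha).1
  · apply finsum_mem_eq_sum_of_inter_support_eq
    ext a
    simp only [Set.mem_inter_iff, Set.Finite.coe_toFinset, Set.mem_union]
    constructor
    · rintro ⟨h1, h2⟩
      exact ⟨⟨h1, Or.inl (subset_tsupport φ h2)⟩, h2⟩
    · rintro ⟨⟨h1, _⟩, h2⟩
      exact ⟨h1, h2⟩
  · rw [Finset.sum_boole, Nat.cast_inj, ← Set.ncard_coe_finset]
    congr 1
    ext a
    simp
    tauto

lemma clc_le {A : Set ℂ} (hA : LocFin A) {φ : ℂ → ℝ} (hφ : HasCompactSupport φ)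
    {B : Set ℂ} (hB : IsCompact B) (h : ∀ a ∈ A, φ a ≤ 1) (h0 : ∀ a ∈ A, a ∉ B → φ a ≤ 0) :
    ∑ᶠ a ∈ A, φ a ≤ ((A ∩ B).ncard : ℝ) := by
  classical
  obtain ⟨S, hS, h1, h2⟩ := clc_aux hA hφ hB
  rw [h1, h2]
  apply Finset.sum_le_sum
  intro a ha
  split_ifs with hb
  · exact h a (hS a ha)
  · exact h0 a (hS a ha) hb

lemma clc_ge {A : Set ℂ} (hA : LocFin A) {φ : ℂ → ℝ} (hφ : HasCompactSupport φ)
    {B : Set ℂ} (hB : IsCompact B) (h : ∀ a ∈ A, 0 ≤ φ a) (h0 : ∀ a ∈ A, a ∈ B → 1 ≤ φ a) :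
    ((A ∩ B).ncard : ℝ) ≤ ∑ᶠ a ∈ A, φ a := by
  classical
  obtain ⟨S, hS, h1, h2⟩ := clc_aux hA hφ hB
  rw [h1, h2]
  apply Finset.sum_le_sum
  intro a ha
  split_ifs with hb
  · exact h0 a (hS a ha) hb
  · exact h a (hS a ha)

/-- If `F : K → C^lf_∞(ℂ)` is vaguely continuous on a compact space `K` and the compact
set `B ⊆ ℂ` satisfies `F(x) ∩ ∂B = ∅` for all `x`, then `x ↦ #(F(x) ∩ B)` is locally
constant; in particular it is constant on connected components. -/
theorem count_locally_constant (K : Type*) [TopologicalSpace K] [CompactSpace K]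
    (F : K → Set ℂ) (hF : ∀ x, IsClf (F x)) (hFc : VaguelyContinuous F)
    (B : Set ℂ) (hB : IsCompact B)
    (hbd : ∀ x : K, F x ∩ frontier B = ∅) :
    IsLocallyConstant (fun x : K => (F x ∩ B).ncard) ∧
    ∀ x y : K, y ∈ connectedComponent x → (F x ∩ B).ncard = (F y ∩ B).ncard := by
  have hlc : IsLocallyConstant (fun x : K => (F x ∩ B).ncard) := by
    rw [IsLocallyConstant.iff_eventually_eq]
    intro x
    have hup : ∀ᶠ y in 𝓝 x, (F y ∩ B).ncard ≤ (F x ∩ B).ncard := by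
      obtain ⟨C, hC, hBC⟩ := exists_compact_superset hB
      have hfin : ((F x ∩ C) \ B).Finite := ((hF x).2.2 C hC).subset Set.diff_subset
      obtain ⟨f, f1, f0, fc, f01⟩ := exists_continuous_one_zero_of_isCompact (s := B)
        (t := ((F x ∩ C) \ B) ∪ (interior C)ᶜ) hB
        (hfin.isClosed.union isOpen_interior.isClosed_compl) (by
          rw [Set.disjoint_left]
          rintro a ha (h | h)
          · exact h.2 ha
          · exact h (hBC ha))
      have hx : ∑ᶠ a ∈ F x, f a ≤ ((F x ∩ B).ncard : ℝ) := by
        refine clc_le (hF x).2.2 fc hB (fun a _ => (f01 a).2) ?_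
        intro a ha hb
        refine (f0 ?_).le
        by_cases hc : a ∈ interior C
        · exact Or.inl ⟨⟨ha, interior_subset hc⟩, hb⟩
        · exact Or.inr hc
      have hev := ((hFc f f.continuous fc).continuousAt (x := x)).eventually_lt_const
        (lt_of_le_of_lt hx (lt_add_one _))
      filter_upwards [hev] with y hy
      have h2 := clc_ge (hF y).2.2 fc hB (fun a _ => (f01 a).1) (fun a _ hb => (f1 hb).ge)
      have h3 := lt_of_le_of_lt h2 hy
      norm_cast at h3
      omega
    have hlow : ∀ᶠ y in 𝓝 x, (F x ∩ B).ncard ≤ (F y ∩ B).ncard := by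
      obtain ⟨f, f1, f0, fc, f01⟩ := exists_continuous_one_zero_of_isCompact (s := F x ∩ B)
        (t := (interior B)ᶜ) ((hF x).2.2 B hB).isCompact isOpen_interior.isClosed_compl (by
          rw [Set.disjoint_left]
          rintro a ⟨ha, hb⟩ h
          have : a ∈ F x ∩ frontier B := ⟨ha, subset_closure hb, h⟩
          rw [hbd x] at this
          exact this)
      have hx : ((F x ∩ B).ncard : ℝ) ≤ ∑ᶠ a ∈ F x, f a :=
        clc_ge (hF x).2.2 fc hB (fun a _ => (f01 a).1) (fun a ha hb => (f1 ⟨ha, hb⟩).ge)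
      have hev := ((hFc f f.continuous fc).continuousAt (x := x)).eventually_const_lt
        (lt_of_lt_of_le (sub_one_lt _) hx)
      filter_upwards [hev] with y hy
      have h2 := clc_le (hF y).2.2 fc hB (fun a _ => (f01 a).2)
        (fun a _ hb => (f0 (fun h => hb (interior_subset h))).le)
      have h3 := sub_lt_iff_lt_add.1 (lt_of_lt_of_le hy h2)
      norm_cast at h3
      omega
    filter_upwards [hup, hlow] with y h1 h2
    exact le_antisymm h1 h2
  refine ⟨hlc, fun x y hy => ?_⟩
  exact hlc.apply_eq_of_isPreconnected isPreconnected_connectedComponent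
    mem_connectedComponent hy
end
end

section
/- Let Y be a Hausdorff topological space and let F : Y → C^lf_∞(ℂ) be vaguely continuous. Then the incidence set E_F := {(y, z) ∈ Y × ℂ : z ∈ F(y)} is closed in Y × ℂ. -/
open scoped Topology
open Filter

noncomputable section

/-- If `Y` is Hausdorff and `F : Y → C^lf_∞(ℂ)` is vaguely continuous, then the incidence
set `E_F = {(y,z) : z ∈ F(y)}` is closed in `Y × ℂ`. -/
theorem incidence_set_closed (Y : Type*) [TopologicalSpace Y] [T2Space Y]
    (F : Y → Set ℂ) (hF : ∀ y, IsClf (F y)) (hFc : VaguelyContinuous F) :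
    IsClosed {p : Y × ℂ | p.2 ∈ F p.1} := by
  rw [← isOpen_compl_iff, isOpen_iff_mem_nhds]
  rintro ⟨y, z⟩ hz
  replace hz : z ∉ F y := hz
  obtain ⟨r, hr, hdis⟩ : ∃ r > 0, ∀ w ∈ F y, r ≤ dist w z := by
    have hfin := (hF y).2.2 _ (isCompact_closedBall z 1)
    have hn : (F y ∩ Metric.closedBall z 1)ᶜ ∈ 𝓝 z :=
      hfin.isClosed.isOpen_compl.mem_nhds (fun h => hz h.1)
    obtain ⟨e, he, hsub⟩ := Metric.mem_nhds_iff.1 hn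
    refine ⟨min e 1, lt_min he one_pos, fun w hw => ?_⟩
    by_contra! hlt
    have h1 : dist w z < e := hlt.trans_le (min_le_left _ _)
    have h2 : dist w z < 1 := hlt.trans_le (min_le_right _ _)
    exact hsub (Metric.mem_ball.2 h1) ⟨hw, Metric.mem_closedBall.2 h2.le⟩
  let φ : ℂ → ℝ := fun w => max 0 (r - dist w z)
  have hφ0 : ∀ w, r ≤ dist w z → φ w = 0 := fun w hw => max_eq_left (by linarith)
  have hφn : ∀ w, 0 ≤ φ w := fun w => le_max_left _ _
  have hφc : Continuous φ := by fun_prop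
  have hφs : HasCompactSupport φ :=
    HasCompactSupport.intro (isCompact_closedBall z r) (fun w hw => hφ0 w (by
      rw [Metric.mem_closedBall] at hw; linarith))
  have hS := hFc φ hφc hφs
  have hSy : (∑ᶠ a ∈ F y, φ a) = 0 :=
    finsum_mem_eq_zero_of_forall_eq_zero (fun w hw => hφ0 w (hdis w hw))
  have hev : ∀ᶠ y' in 𝓝 y, (∑ᶠ a ∈ F y', φ a) < r / 2 := by
    apply hS.continuousAt.eventually_lt_const
    show (∑ᶠ a ∈ F y, φ a) < r / 2
    rw [hSy]; linarith
  have hb : ∀ᶠ z' in 𝓝 z, dist z' z < r / 2 := Metric.ball_mem_nhds z (half_pos hr)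
  rw [nhds_prod_eq]
  filter_upwards [hev.prod_mk hb]
  rintro ⟨y', z'⟩ ⟨h1, h2⟩ hmem
  replace hmem : z' ∈ F y' := hmem
  simp only at h1 h2
  have h3 : r / 2 < φ z' := lt_of_lt_of_le (by linarith) (le_max_right _ _)
  have hfs : (F y' ∩ Function.support φ).Finite := by
    refine ((hF y').2.2 _ hφs).subset ?_
    exact Set.inter_subset_inter_right _ (subset_tsupport φ)
  have h4 : φ z' ≤ ∑ᶠ a ∈ F y', φ a := by
    rw [finsum_mem_eq_sum _ hfs]
    refine Finset.single_le_sum (f := φ) (fun w _ => hφn w) ?_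
    rw [Set.Finite.mem_toFinset]
    exact ⟨hmem, by rw [Function.mem_support]; linarith⟩
  linarith
end
end

section
/- Let X be a topological space and let E ⊆ X × ℂ be a closed subset such that the restriction to E of the first projection is a covering map onto X. Let U ⊆ X be open and let s_n : U → ℂ (n ∈ ℕ) be continuous functions with s_n(x) ≠ s_m(x) for all x ∈ U and n ≠ m, such that E ∩ (U × ℂ) = ⋃_{n∈ℕ} {(x, s_n(x)) : x ∈ U}. Then for every compact set K ⊆ U and every R > 0 there exists N ∈ ℕ such that |s_n(x)| > R for all x ∈ K and all n ≥ N; equivalently, only finitely many of the graphs {(x, s_n(x)) : x ∈ U} meet K × {z ∈ ℂ : |z| ≤ R}. -/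
/-- Uniform escape of sheets: let `E ⊆ X × ℂ` be closed with the first projection
restricting to a covering map of `X`, and suppose over an open `U ⊆ X` the set `E` is the
disjoint union of the graphs of continuous functions `s_n : U → ℂ` with pairwise distinct
values.  Then for every compact `K ⊆ U` and every `R > 0` there is `N` with
`|s_n(x)| > R` for all `x ∈ K`, `n ≥ N`. -/
theorem sheets_escape_uniformly (X : Type*) [TopologicalSpace X]
    (E : Set (X × ℂ)) (hEclosed : IsClosed E)
    (hcov : IsCoveringMap (fun e : E => e.1.1))
    (hsurj : Function.Surjective (fun e : E => e.1.1))
    (U : Set X) (hU : IsOpen U) (s : ℕ → X → ℂ)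
    (hscont : ∀ n, ContinuousOn (s n) U)
    (hdisj : ∀ x ∈ U, ∀ n m : ℕ, n ≠ m → s n x ≠ s m x)
    (hgraph : ∀ x ∈ U, ∀ z : ℂ, (x, z) ∈ E ↔ ∃ n, z = s n x)
    (K : Set X) (hK : IsCompact K) (hKU : K ⊆ U) (R : ℝ) (hR : 0 < R) :
    ∃ N : ℕ, ∀ x ∈ K, ∀ n, N ≤ n → R < ‖s n x‖ := by
  classical
  have key : ∃ N : ℕ, ∀ q ∈ K ×ˢ Metric.closedBall (0 : ℂ) R, q.1 ∈ U →
      ∀ n, N ≤ n → q.2 ≠ s n q.1 := by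
    refine (hK.prod (isCompact_closedBall (0 : ℂ) R)).induction_on
      (p := fun S => ∃ N : ℕ, ∀ q ∈ S, q.1 ∈ U → ∀ n, N ≤ n → q.2 ≠ s n q.1) ?_ ?_ ?_ ?_
    · exact ⟨0, fun q hq => absurd hq (Set.notMem_empty q)⟩
    · rintro S T hST ⟨N, hN⟩
      exact ⟨N, fun q hq => hN q (hST hq)⟩
    · rintro S T ⟨N, hN⟩ ⟨M, hM⟩
      refine ⟨max N M, fun q hq hqU n hn => ?_⟩
      rcases hq with hq | hq
      · exact hN q hq hqU n (le_trans (le_max_left _ _) hn)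
      · exact hM q hq hqU n (le_trans (le_max_right _ _) hn)
    · rintro ⟨x, z⟩ ⟨hxK, -⟩
      have hxU : x ∈ U := hKU hxK
      suffices h : ∃ T ∈ nhds (x, z), ∃ N : ℕ, ∀ q ∈ T, q.1 ∈ U →
          ∀ n, N ≤ n → q.2 ≠ s n q.1 by
        obtain ⟨T, hT, h⟩ := h
        exact ⟨T, mem_nhdsWithin_of_mem_nhds hT, h⟩
      by_cases hE : (x, z) ∈ E
      · obtain ⟨m, rfl⟩ := (hgraph x hxU z).1 hE
        -- a neighbourhood in `E` on which the projection is injective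
        obtain ⟨e, he, hpe⟩ := hcov.isLocalHomeomorph ⟨(x, s m x), hE⟩
        have hinj : Set.InjOn (fun e : E => e.1.1) e.source := by
          rw [hpe]; exact e.injOn
        obtain ⟨W, hW, hWe⟩ := isOpen_induced_iff.1 e.open_source
        have hxW : (x, s m x) ∈ W := by
          have : (⟨(x, s m x), hE⟩ : E) ∈ Subtype.val ⁻¹' W := by rw [hWe]; exact he
          exact this
        have hc : ContinuousAt (fun y => (y, s m y)) x :=
          continuousAt_id.prodMk ((hscont m).continuousAt (hU.mem_nhds hxU))
        have hV : ∀ᶠ y in nhds x, (y, s m y) ∈ W := hc (hW.mem_nhds hxW)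
        have hV2 : ∀ᶠ q in nhds (x, s m x), (q.1, s m q.1) ∈ W :=
          (continuous_fst.tendsto (x, s m x)).eventually (p := fun y => (y, s m y) ∈ W) hV
        refine ⟨_, Filter.inter_mem hV2 (hW.mem_nhds hxW), m + 1, ?_⟩
        rintro ⟨y, w⟩ ⟨h1, h2⟩ hyU n hn hw
        simp only at hyU hw
        subst hw
        have hE1 : (y, s m y) ∈ E := (hgraph y hyU _).2 ⟨m, rfl⟩
        have hE2 : (y, s n y) ∈ E := (hgraph y hyU _).2 ⟨n, rfl⟩
        have a1 : (⟨_, hE1⟩ : E) ∈ e.source := by rw [← hWe]; exact h1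
        have a2 : (⟨_, hE2⟩ : E) ∈ e.source := by rw [← hWe]; exact h2
        have := hinj a1 a2 rfl
        have h3 : s m y = s n y := congrArg (fun e : E => e.1.2) this
        exact hdisj y hyU m n (by omega) h3
      · refine ⟨Eᶜ, hEclosed.isOpen_compl.mem_nhds hE, 0, ?_⟩
        rintro ⟨y, w⟩ hq hyU n - hw
        exact hq ((hgraph y hyU w).2 ⟨n, hw⟩)
  obtain ⟨N, hN⟩ := key
  refine ⟨N, fun x hx n hn => ?_⟩
  by_contra hlt
  exact hN (x, s n x) ⟨hx, by simpa using hlt⟩ (hKU hx) n hn rfl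
end

section
/- Let X be a topological space and let E ⊆ X × ℂ be a closed subset such that the restriction to E of the first projection is a covering map onto X. Let U ⊆ X be open and let s_n : U → ℂ (n ≥ 1) be continuous functions with s_n(x) ≠ s_m(x) for all x ∈ U and n ≠ m, such that E ∩ (U × ℂ) = ⋃_{n≥1} {(x, s_n(x)) : x ∈ U}. Assume there exists c ∈ ℂ with c ≠ s_n(x) for all x ∈ U and all n. Define the Weierstrass elementary factor E_n(w) = (1 − w)·exp(∑_{j=1}^{n} w^j / j). Then the infinite product F_U(x, z) = ∏_{n=1}^{∞} E_n((z − c)/(s_n(x) − c)) converges locally uniformly on U × ℂ; F_U is continuous on U × ℂ; for each x ∈ U the function z ↦ F_U(x, z) is entire; and for each x ∈ U the zeros of z ↦ F_U(x, z) are exactly the points s_n(x), n ≥ 1, each a simple zero (zero of order one). -/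
open Filter

noncomputable section

/-- The Weierstrass elementary factor `E_p(w) = (1 - w)·exp(∑_{j=1}^{p} w^j / j)`. -/
def wfactor (p : ℕ) (w : ℂ) : ℂ :=
  (1 - w) * Complex.exp (∑ j ∈ Finset.range p, w ^ (j + 1) / ((j : ℂ) + 1))

lemma wfactor_bound (p : ℕ) (w : ℂ) (hw : ‖w‖ ≤ 1 / 2) :
    ‖wfactor p w - 1‖ ≤ 4 * (1 / 2) ^ (p + 1) := by
  have hT : Complex.logTaylor (p + 1) (-w) =
      -∑ j ∈ Finset.range p, w ^ (j + 1) / ((j : ℂ) + 1) := by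
    unfold Complex.logTaylor
    rw [Finset.sum_range_succ', ← Finset.sum_neg_distrib]
    simp only [Nat.cast_zero, div_zero, add_zero]
    refine Finset.sum_congr rfl fun j _ => ?_
    have : (-1 : ℂ) ^ (j + 1 + 1) * (-w) ^ (j + 1) = -(w ^ (j + 1)) := by
      rw [neg_pow w, ← mul_assoc, pow_succ (-1 : ℂ) (j + 1), mul_right_comm]
      have h : (-1 : ℂ) ^ (j + 1) * (-1) ^ (j + 1) = 1 := by rw [← mul_pow]; simp
      linear_combination (-(w ^ (j + 1))) * h
    rw [this, neg_div]
    push_cast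
    rfl
  have h1 := Complex.norm_log_sub_logTaylor_le p (z := -w) (by rw [norm_neg]; linarith)
  rw [hT, norm_neg, sub_neg_eq_add] at h1
  have hne : (1 + -w) ≠ 0 := by
    intro h
    have : w = 1 := by linear_combination -h
    rw [this] at hw
    norm_num at hw
  set u := Complex.log (1 + -w) + ∑ j ∈ Finset.range p, w ^ (j + 1) / ((j : ℂ) + 1) with hu
  have hE : wfactor p w = Complex.exp u := by
    rw [hu, Complex.exp_add, Complex.exp_log hne, wfactor, sub_eq_add_neg]
  have h2 : ‖u‖ ≤ 2 * (1 / 2) ^ (p + 1) := by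
    refine h1.trans ?_
    have h3 : (1 - ‖w‖)⁻¹ ≤ 2 := by
      rw [inv_le_comm₀ (by linarith) (by norm_num)]
      linarith
    have h4 : ‖w‖ ^ (p + 1) ≤ (1 / 2) ^ (p + 1) := pow_le_pow_left₀ (norm_nonneg _) hw _
    have h5 : 0 ≤ (1 - ‖w‖)⁻¹ := inv_nonneg.2 (by linarith)
    calc ‖w‖ ^ (p + 1) * (1 - ‖w‖)⁻¹ / (p + 1) ≤ ‖w‖ ^ (p + 1) * (1 - ‖w‖)⁻¹ :=
          div_le_self (by positivity) (by linarith [(Nat.cast_nonneg p : (0:ℝ) ≤ p)])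
      _ ≤ (1 / 2) ^ (p + 1) * 2 := by gcongr
      _ = _ := by ring
  have h6 : ‖u‖ ≤ 1 := by
    refine h2.trans ?_
    rw [pow_succ]
    have : ((1:ℝ) / 2) ^ p ≤ 1 := pow_le_one₀ (by norm_num) (by norm_num)
    linarith
  rw [hE]
  have := Complex.norm_exp_sub_one_le h6
  linarith

lemma prod_locUnif {α : Type*} [TopologicalSpace α] {S : Set α} {f : ℕ → α → ℂ}
    (hc : ∀ n, ContinuousOn (f n) S)
    (h : ∀ p ∈ S, ∃ V ∈ nhdsWithin p S, ∃ u : ℕ → ℝ, Summable u ∧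
      ∀ᶠ n in atTop, ∀ x ∈ V, ‖f n x‖ ≤ u n) :
    TendstoLocallyUniformlyOn (fun m x => ∏ n ∈ Finset.range m, (1 + f n x))
      (fun x => ∏' n, (1 + f n x)) atTop S := by
  have key : ∀ p ∈ S, ∃ V ∈ nhdsWithin p S,
      TendstoUniformlyOn (fun m x => ∏ n ∈ Finset.range m, (1 + f n x))
      (fun x => ∏' n, (1 + f n x)) atTop V := by
    intro p hp
    obtain ⟨V, hV, u, hu, hb⟩ := h p hp
    obtain ⟨N, hN⟩ := eventually_atTop.1 hb
    have hfin : ∀ᶠ x in nhdsWithin p S, ∀ n ∈ Finset.range N, ‖f n x‖ < ‖f n p‖ + 1 := by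
      rw [Filter.eventually_all_finset]
      intro n _
      exact (hc n p hp).norm.eventually_lt_const (by linarith)
    let K := (V ∩ {x | ∀ n ∈ Finset.range N, ‖f n x‖ < ‖f n p‖ + 1}) ∩ S
    have hK : K ∈ nhdsWithin p S := inter_mem (inter_mem hV hfin) self_mem_nhdsWithin
    refine ⟨K, hK, ?_⟩
    have hpK : p ∈ K := mem_of_mem_nhdsWithin hp hK
    have : Nonempty K := ⟨⟨p, hpK⟩⟩
    let f' : ℕ → BoundedContinuousFunction K ℂ := fun n =>
      BoundedContinuousFunction.ofNormedAddCommGroup (fun x : K => f n x)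
        (continuousOn_iff_continuous_domRestrict.1 ((hc n).mono fun x hx => hx.2))
        (max (u n) (‖f n p‖ + 1)) (by
          intro x
          rcases lt_or_ge n N with hn | hn
          · exact le_max_of_le_right (x.2.1.2 n (Finset.mem_range.2 hn)).le
          · exact le_max_of_le_left (hN n hn x x.2.1.1))
    have hM : Multipliable fun i => 1 + f' i := by
      refine multipliable_one_add_of_summable
        (hu.of_norm_bounded_eventually_nat ?_)
      filter_upwards [eventually_ge_atTop N] with n hn
      rw [norm_norm, BoundedContinuousFunction.norm_le_of_nonempty]
      exact fun x => hN n hn x x.2.1.1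
    have hT := hM.hasProd.tendsto_prod_nat
    rw [BoundedContinuousFunction.tendsto_iff_tendstoUniformly] at hT
    rw [tendstoUniformlyOn_iff_tendstoUniformly_comp_coe]
    have e1 : ∀ (T : Finset ℕ) (x : K), (∏ n ∈ T, (1 + f' n)) x = ∏ n ∈ T, (1 + f n x) := by
      intro T x
      induction T using Finset.induction_on with
      | empty => simp
      | insert a T ha ih =>
        rw [Finset.prod_insert ha, Finset.prod_insert ha, BoundedContinuousFunction.mul_apply, ih]
        rfl
    have e2 : ∀ x : K, (∏' n, (1 + f' n)) x = ∏' n, (1 + f n x) := by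
      intro x
      refine (HasProd.tprod_eq ?_).symm
      have := (((BoundedContinuousFunction.evalCLM ℂ x : BoundedContinuousFunction K ℂ →L[ℂ] ℂ).continuous).tendsto _).comp hM.hasProd
      refine this.congr fun T => ?_
      exact e1 T x
    intro v hv
    filter_upwards [hT v hv] with m hm x
    have := hm x
    rw [e2] at this
    simp only [e1] at this
    exact this
  intro v hv p hp
  obtain ⟨V, hV, hu⟩ := key p hp
  exact ⟨V, hV, hu v hv⟩

lemma eventually_far {X : Type*} [TopologicalSpace X]
    (E : Set (X × ℂ)) (hEclosed : IsClosed E)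
    (hcov : IsCoveringMap (fun e : E => e.1.1))
    (U : Set X) (hU : IsOpen U) (s : ℕ → X → ℂ)
    (hscont : ∀ n, ContinuousOn (s n) U)
    (hdisj : ∀ x ∈ U, ∀ n m : ℕ, n ≠ m → s n x ≠ s m x)
    (hgraph : ∀ x ∈ U, ∀ z : ℂ, (x, z) ∈ E ↔ ∃ n, z = s n x)
    (x₀ : X) (hx₀ : x₀ ∈ U) (K : Set ℂ) (hK : IsCompact K) :
    ∃ k : ℕ, ∀ᶠ x in nhds x₀, ∀ n, s n x ∈ K → n ≤ k := by
  have loc : ∀ z : ℂ, ∃ k : ℕ, ∀ᶠ p in nhds (x₀, z), ∀ n, p.2 = s n p.1 → n ≤ k := by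
    intro z
    have hUn : ∀ᶠ p : X × ℂ in nhds (x₀, z), p.1 ∈ U :=
      continuous_fst.continuousAt.eventually (hU.mem_nhds hx₀)
    by_cases hz : (x₀, z) ∈ E
    · obtain ⟨k, rfl⟩ := (hgraph x₀ hx₀ z).1 hz
      refine ⟨k, ?_⟩
      obtain ⟨e, he, hfe⟩ := hcov.isLocalHomeomorph ⟨(x₀, s k x₀), hz⟩
      obtain ⟨O, hO, hOe⟩ := isOpen_induced_iff.1 e.open_source
      have hmem : (x₀, s k x₀) ∈ O := by
        have : (⟨(x₀, s k x₀), hz⟩ : E) ∈ Subtype.val ⁻¹' O := hOe ▸ he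
        exact this
      have hsk : ContinuousAt (fun x => (x, s k x)) x₀ :=
        continuousAt_id.prodMk ((hscont k).continuousAt (hU.mem_nhds hx₀))
      have h1 : ∀ᶠ x in nhds x₀, (x, s k x) ∈ O := hsk.eventually (hO.mem_nhds hmem)
      have h2 : ∀ᶠ p : X × ℂ in nhds (x₀, s k x₀), (p.1, s k p.1) ∈ O :=
        (continuous_fst.tendsto (x₀, s k x₀)).eventually h1
      filter_upwards [hUn, h2, hO.mem_nhds hmem] with p hpU hp2 hpO n hn
      by_contra hlt
      have hpE : p ∈ E := (hgraph p.1 hpU p.2).2 ⟨n, hn⟩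
      have hqE : (p.1, s k p.1) ∈ E := (hgraph p.1 hpU _).2 ⟨k, rfl⟩
      have a1 : (⟨p, hpE⟩ : E) ∈ e.source := by rw [← hOe]; exact hpO
      have a2 : (⟨(p.1, s k p.1), hqE⟩ : E) ∈ e.source := by rw [← hOe]; exact hp2
      have := e.injOn a1 a2 (by rw [← hfe])
      have h3 : p.2 = s k p.1 := congrArg (fun e : E => e.1.2) this
      exact hdisj p.1 hpU n k (by omega) (hn.symm.trans h3)
    · refine ⟨0, ?_⟩
      filter_upwards [hUn, hEclosed.isOpen_compl.mem_nhds hz] with p hpU hpE n hn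
      exact absurd ((hgraph p.1 hpU p.2).2 ⟨n, hn⟩) hpE
  refine hK.induction_on (p := fun K => ∃ k : ℕ, ∀ᶠ x in nhds x₀, ∀ n, s n x ∈ K → n ≤ k)
    ⟨0, by simp⟩ ?_ ?_ ?_
  · rintro A B hAB ⟨k, hk⟩
    exact ⟨k, hk.mono fun x hx n hn => hx n (hAB hn)⟩
  · rintro A B ⟨k, hk⟩ ⟨l, hl⟩
    refine ⟨max k l, ?_⟩
    filter_upwards [hk, hl] with x h1 h2 n hn
    rcases hn with hn | hn
    · exact le_max_of_le_left (h1 n hn)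
    · exact le_max_of_le_right (h2 n hn)
  · intro z _
    obtain ⟨k, hk⟩ := loc z
    rw [nhds_prod_eq] at hk
    obtain ⟨P, hP, Q, hQ, hPQ⟩ := eventually_prod_iff.1 hk
    refine ⟨{z | Q z}, mem_nhdsWithin_of_mem_nhds hQ, k, ?_⟩
    filter_upwards [hP] with x hx n hn
    exact hPQ hx hn n rfl

lemma wfactor_differentiable (p : ℕ) : Differentiable ℂ (wfactor p) := by
  unfold wfactor
  fun_prop

lemma wfactor_eq_zero (p : ℕ) (w : ℂ) : wfactor p w = 0 ↔ w = 1 := by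
  unfold wfactor
  rw [mul_eq_zero, or_iff_left (Complex.exp_ne_zero _), sub_eq_zero, eq_comm]

lemma wfactor_deriv_one (p : ℕ) : deriv (wfactor p) 1 ≠ 0 := by
  have h1 : HasDerivAt (fun w : ℂ => 1 - w) (-1) 1 := by
    simpa using (hasDerivAt_id (1 : ℂ)).const_sub 1
  have h2 : DifferentiableAt ℂ (fun w : ℂ =>
    Complex.exp (∑ j ∈ Finset.range p, w ^ (j + 1) / ((j : ℂ) + 1))) 1 := by fun_prop
  have := (h1.mul h2.hasDerivAt).deriv
  change deriv (wfactor p) 1 = _ at this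
  rw [this]
  simp [Complex.exp_ne_zero]

/-- Local Weierstrass products: let `E ⊆ X × ℂ` be closed with the first projection
restricting to a covering map of `X`, and over an open `U ⊆ X` let `E` be the disjoint
union of the graphs of continuous `s_n : U → ℂ` (`n ≥ 1`, indexed here by `n : ℕ` with
`s n` representing `s_{n+1}`), avoiding a constant `c`.  Then the products
`F_U(x,z) = ∏_{n≥1} E_n((z-c)/(s_n(x)-c))` converge locally uniformly on `U × ℂ` to a
continuous function, entire in `z` for each `x ∈ U`, whose zeros in `z` are exactly the
`s_n(x)` and are all simple. -/
theorem local_weierstrass_realization (X : Type*) [TopologicalSpace X]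
    (E : Set (X × ℂ)) (hEclosed : IsClosed E)
    (hcov : IsCoveringMap (fun e : E => e.1.1))
    (hsurj : Function.Surjective (fun e : E => e.1.1))
    (U : Set X) (hU : IsOpen U) (s : ℕ → X → ℂ)
    (hscont : ∀ n, ContinuousOn (s n) U)
    (hdisj : ∀ x ∈ U, ∀ n m : ℕ, n ≠ m → s n x ≠ s m x)
    (hgraph : ∀ x ∈ U, ∀ z : ℂ, (x, z) ∈ E ↔ ∃ n, z = s n x)
    (c : ℂ) (hc : ∀ x ∈ U, ∀ n, s n x ≠ c) :
    ∃ F : X → ℂ → ℂ,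
      TendstoLocallyUniformlyOn
        (fun m : ℕ => fun p : X × ℂ =>
          ∏ n ∈ Finset.range m, wfactor (n + 1) ((p.2 - c) / (s n p.1 - c)))
        (fun p : X × ℂ => F p.1 p.2) atTop (U ×ˢ (Set.univ : Set ℂ)) ∧
      ContinuousOn (fun p : X × ℂ => F p.1 p.2) (U ×ˢ (Set.univ : Set ℂ)) ∧
      (∀ x ∈ U, Differentiable ℂ (F x)) ∧
      (∀ x ∈ U, ∀ z : ℂ, F x z = 0 ↔ ∃ n, z = s n x) ∧
      (∀ x ∈ U, ∀ n, deriv (F x) (s n x) ≠ 0) := by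
  have hfar := eventually_far E hEclosed hcov U hU s hscont hdisj hgraph
  let f : ℕ → X × ℂ → ℂ := fun n p => wfactor (n + 1) ((p.2 - c) / (s n p.1 - c)) - 1
  have hf1 : ∀ n p, 1 + f n p = wfactor (n + 1) ((p.2 - c) / (s n p.1 - c)) := by
    intro n p; simp [f]
  let u : ℕ → ℝ := fun n => 4 * (1 / 2) ^ (n + 1 + 1)
  have hu : Summable u := by
    have : Summable fun n : ℕ => ((1:ℝ) / 2) ^ n := summable_geometric_two
    exact ((summable_nat_add_iff 2).2 this).mul_left 4
  have hfb : ∀ x₀ ∈ U, ∀ z₀ : ℂ, ∃ V ∈ nhds x₀, ∃ W ∈ nhds z₀,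
      ∀ᶠ n in atTop, ∀ x ∈ V, ∀ z ∈ W, ‖f n (x, z)‖ ≤ u n := by
    intro x₀ hx₀ z₀
    obtain ⟨k, hk⟩ := hfar x₀ hx₀ _ (isCompact_closedBall c (2 * (‖z₀ - c‖ + 1)))
    have hW : ∀ᶠ z in nhds z₀, ‖z - c‖ < ‖z₀ - c‖ + 1 :=
      (show Continuous fun z : ℂ => ‖z - c‖ by fun_prop).continuousAt.eventually_lt_const
        (lt_add_one _)
    refine ⟨_, hk, _, hW, ?_⟩
    filter_upwards [eventually_gt_atTop k] with n hn x hx z hz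
    refine wfactor_bound (n + 1) _ ?_
    have h1 : ¬ s n x ∈ Metric.closedBall c (2 * (‖z₀ - c‖ + 1)) := fun h => by
      have : n ≤ k := hx n h
      omega
    rw [Metric.mem_closedBall, not_le, dist_eq_norm] at h1
    have hz' : ‖z - c‖ < ‖z₀ - c‖ + 1 := hz
    have := norm_nonneg (z₀ - c)
    rw [norm_div, div_le_iff₀ (by linarith)]
    linarith
  have hcontf : ∀ n, ContinuousOn (f n) (U ×ˢ (Set.univ : Set ℂ)) := by
    intro n
    have hs : ContinuousOn (fun p : X × ℂ => s n p.1) (U ×ˢ (Set.univ : Set ℂ)) :=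
      (hscont n).comp continuousOn_fst fun p hp => hp.1
    have hq : ContinuousOn (fun p : X × ℂ => (p.2 - c) / (s n p.1 - c))
        (U ×ˢ (Set.univ : Set ℂ)) :=
      (continuousOn_snd.sub continuousOn_const).div (hs.sub continuousOn_const)
        fun p hp => sub_ne_zero.2 (hc p.1 hp.1 n)
    exact ((wfactor_differentiable (n + 1)).continuous.comp_continuousOn hq).sub continuousOn_const
  have hdf : ∀ x n, Differentiable ℂ fun z => f n (x, z) := by
    intro x n
    exact ((wfactor_differentiable (n + 1)).comp
      (f := fun z => (z - c) / (s n x - c)) (by fun_prop)).sub_const 1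
  have hsum : ∀ x ∈ U, ∀ z, Summable fun n => ‖f n (x, z)‖ := by
    intro x hx z
    obtain ⟨V, hV, W, hW, hb⟩ := hfb x hx z
    refine hu.of_norm_bounded_eventually_nat ?_
    filter_upwards [hb] with n hn
    rw [norm_norm]
    exact hn x (mem_of_mem_nhds hV) z (mem_of_mem_nhds hW)
  have hzero : ∀ x ∈ U, ∀ n z, 1 + f n (x, z) = 0 ↔ z = s n x := by
    intro x hx n z
    have h0 := sub_ne_zero.2 (hc x hx n)
    rw [hf1, wfactor_eq_zero, div_eq_one_iff_eq h0, sub_left_inj]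
  -- single-variable products with bounded modification
  have hone : ∀ x ∈ U, ∀ g : ℕ → ℂ → ℂ, (∀ n, Differentiable ℂ (g n)) →
      (∀ n z, ‖g n z‖ ≤ ‖f n (x, z)‖) → Differentiable ℂ fun z => ∏' n, (1 + g n z) := by
    intro x hx g hg hgf
    have hT := prod_locUnif (S := Set.univ) (f := g) (fun n => (hg n).continuous.continuousOn) (by
      intro z _
      obtain ⟨V, hV, W, hW, hb⟩ := hfb x hx z
      refine ⟨W, mem_nhdsWithin_of_mem_nhds hW, u, hu, ?_⟩
      filter_upwards [hb] with n hn y hy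
      exact (hgf n y).trans (hn x (mem_of_mem_nhds hV) y hy))
    rw [← differentiableOn_univ]
    refine hT.differentiableOn (Eventually.of_forall fun m => ?_) isOpen_univ
    exact (Differentiable.fun_finsetProd fun n _ => (hg n).const_add 1).differentiableOn
  have hlu := prod_locUnif hcontf (by
    rintro ⟨x, z⟩ ⟨hx, -⟩
    obtain ⟨V, hV, W, hW, hb⟩ := hfb x hx z
    refine ⟨V ×ˢ W, mem_nhdsWithin_of_mem_nhds (prod_mem_nhds hV hW), u, hu, ?_⟩
    filter_upwards [hb] with n hn p hp
    exact hn p.1 hp.1 p.2 hp.2)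
  have hfac : ∀ x ∈ U, ∀ n, ∃ G : ℂ → ℂ, Differentiable ℂ G ∧ G (s n x) ≠ 0 ∧
      ∀ z, ∏' m, (1 + f m (x, z)) = (1 + f n (x, z)) * G z := by
    intro x hx n
    let g : ℕ → ℂ → ℂ := fun m z => if m = n then 0 else f m (x, z)
    have hgf : ∀ m z, ‖g m z‖ ≤ ‖f m (x, z)‖ := by
      intro m z
      by_cases h : m = n <;> simp [g, h]
    have hgs : ∀ z, Summable fun m => ‖g m z‖ := fun z =>
      (hsum x hx z).of_nonneg_of_le (fun _ => norm_nonneg _) fun m => hgf m z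
    refine ⟨fun z => ∏' m, (1 + g m z), hone x hx g ?_ hgf, ?_, ?_⟩
    · intro m
      by_cases h : m = n
      · simp [g, h]
      · simpa [g, h] using hdf x m
    · refine tprod_one_add_ne_zero_of_summable ?_ (hgs _)
      intro m
      by_cases h : m = n
      · simp [g, h]
      · simp only [g, h, if_false]
        rw [Ne, hzero x hx]
        exact hdisj x hx n m (Ne.symm h)
    · intro z
      have e : ∀ m, (1 + g m z) = if m = n then 1 else 1 + f m (x, z) := by
        intro m
        by_cases h : m = n <;> simp [g, h]
      have hm := multipliable_one_add_of_summable (hgs z)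
      rw [Multipliable.tprod_eq_mul_tprod_ite' (f := fun m => 1 + f m (x, z)) n]
      · simp only [e]
      · refine hm.congr fun m => ?_
        rw [e, Function.update_apply]
  refine ⟨fun x z => ∏' n, (1 + f n (x, z)), ?_, ?_, ?_, ?_, ?_⟩
  · simpa only [hf1] using hlu
  · refine hlu.continuousOn (Frequently.of_forall fun m => ?_)
    exact continuousOn_finsetProd _ fun n _ => continuousOn_const.add (hcontf n)
  · intro x hx
    exact hone x hx (fun n z => f n (x, z)) (hdf x) fun _ _ => le_rfl
  · intro x hx z
    constructor
    · intro h
      by_contra hne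
      push Not at hne
      exact tprod_one_add_ne_zero_of_summable
        (fun n => (hzero x hx n z).not.2 (hne n)) (hsum x hx z) h
    · rintro ⟨n, rfl⟩
      obtain ⟨G, -, -, hG⟩ := hfac x hx n
      have := hG (s n x)
      rw [(hzero x hx n _).2 rfl, zero_mul] at this
      exact this
  · intro x hx n
    obtain ⟨G, hGd, hG0, hG⟩ := hfac x hx n
    have h0 := sub_ne_zero.2 (hc x hx n)
    have hlin : HasDerivAt (fun z : ℂ => (z - c) / (s n x - c)) (1 / (s n x - c)) (s n x) :=
      ((hasDerivAt_id _).sub_const c).div_const _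
    have hval : (s n x - c) / (s n x - c) = 1 := div_self h0
    have hw : HasDerivAt (wfactor (n + 1)) (deriv (wfactor (n + 1)) 1)
        ((s n x - c) / (s n x - c)) := by
      rw [hval]
      exact (wfactor_differentiable (n + 1) 1).hasDerivAt
    have hcomp := HasDerivAt.comp (s n x) hw hlin
    have hprod := (hcomp.mul (hGd (s n x)).hasDerivAt).deriv
    have heq : (fun z => ∏' m, (1 + f m (x, z))) =
        (wfactor (n + 1) ∘ fun z : ℂ => (z - c) / (s n x - c)) * G := by
      funext z
      rw [hG z, hf1]
      rfl
    change deriv (fun z => ∏' m, (1 + f m (x, z))) (s n x) ≠ 0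
    rw [heq, hprod]
    have hz : wfactor (n + 1) ((s n x - c) / (s n x - c)) = 0 := by
      rw [wfactor_eq_zero, hval]
    simp only [Function.comp, hz, zero_mul, add_zero]
    exact mul_ne_zero (mul_ne_zero (wfactor_deriv_one _) (one_div_ne_zero h0)) hG0
end
end
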